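/- arXiv:2303.17172 — 4 statements merged into one kernel-verified Lean document; each statement's English description precedes it below -/
import Mathlib

section
/- Let 0 ≤ l ≤ r be integers and let M be a q^r-divisible multiset of points in PG(v-1,q) of cardinality n = q^l·[r+1-l]_q. Then there exists an (r+1-l)-dimensional subspace K such that M = q^l·χ_K, i.e., M(P) = q^l for every point P in K and M(P) = 0 otherwise. -/
open scoped Classical

noncomputable def MVal {F V : Type*} [Field F] [AddCommGroup V] [Module F V]
    (M : Projectivization F V → ℕ) (K : Submodule F V) : ℕ :=
  ∑ᶠ P ∈ {P : Projectivization F V | P.submodule ≤ K}, M P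

def IsDivisible {F V : Type*} [Field F] [AddCommGroup V] [Module F V] (Δ : ℕ)
    (M : Projectivization F V → ℕ) : Prop :=
  ∀ H : Submodule F V, Module.finrank F H + 1 = Module.finrank F V →
    MVal M H ≡ MVal M ⊤ [MOD Δ]

def IsSpanning {F V : Type*} [Field F] [AddCommGroup V] [Module F V]
    (M : Projectivization F V → ℕ) : Prop :=
  (⨆ P ∈ {P : Projectivization F V | 0 < M P}, P.submodule) = ⊤

def gaussNum (q k : ℕ) : ℕ := ∑ i ∈ Finset.range k, q ^ i

def IsProjBase {F V : Type*} [Field F] [AddCommGroup V] [Module F V]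
    (n : ℕ) (B : Finset (Projectivization F V)) : Prop :=
  B.card = n ∧ ∀ T ⊆ B, T.card = n - 1 →
    Module.finrank F ((⨆ P ∈ T, Projectivization.submodule P) : Submodule F V) = n - 1


section aux
variable {F : Type*} [Field F] [Fintype F] {v : ℕ}

noncomputable instance dualFintype : Fintype (Module.Dual F (Fin v → F)) :=
  haveI : Finite (Module.Dual F (Fin v → F)) := Module.finite_of_finite F
  Fintype.ofFinite _

/-- number of functionals annihilating `U` -/
noncomputable def annCard (U : Submodule F (Fin v → F)) : ℤ :=
  ∑ f : Module.Dual F (Fin v → F), if U ≤ LinearMap.ker f then 1 else 0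

lemma annCard_mul (U : Submodule F (Fin v → F)) :
    annCard U * (Fintype.card F : ℤ) ^ Module.finrank F U = (Fintype.card F : ℤ) ^ v := by
  haveI : Fintype U.dualAnnihilator := Fintype.ofFinite _
  have h1 : annCard U = (Nat.card U.dualAnnihilator : ℤ) := by
    unfold annCard
    rw [Finset.sum_boole, Nat.card_eq_fintype_card]
    congr 1
    symm
    apply Fintype.card_of_subtype
    intro f
    simp [Submodule.mem_dualAnnihilator, SetLike.le_def]
  have h2 := Subspace.finrank_add_finrank_dualAnnihilator_eq U
  rw [Module.finrank_fin_fun] at h2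
  rw [h1, Nat.card_eq_fintype_card, Module.card_eq_pow_finrank (K := F)]
  push_cast
  rw [← pow_add, add_comm, h2]

lemma MVal_eq (M : Projectivization F (Fin v → F) → ℕ) [Fintype (Projectivization F (Fin v → F))]
    (K : Submodule F (Fin v → F)) :
    MVal M K = ∑ P, if P.submodule ≤ K then M P else 0 := by
  unfold MVal
  rw [finsum_mem_def, finsum_eq_sum_of_fintype]
  apply Finset.sum_congr rfl
  intro P _
  simp [Set.indicator_apply]

lemma gauss_mul (q k : ℕ) : (gaussNum q k : ℤ) * ((q : ℤ) - 1) = (q : ℤ) ^ k - 1 := by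
  unfold gaussNum
  push_cast
  exact geom_sum_mul _ _

lemma finrank_sup_points (P Q : Projectivization F (Fin v → F)) (h : P ≠ Q) :
    Module.finrank F (P.submodule ⊔ Q.submodule : Submodule F (Fin v → F)) = 2 := by
  have h0 := Submodule.finrank_sup_add_finrank_inf_eq P.submodule Q.submodule
  have hd : P.submodule ⊓ Q.submodule = ⊥ := by
    by_contra hne
    apply h
    have hr : 1 ≤ Module.finrank F (P.submodule ⊓ Q.submodule : Submodule F (Fin v → F)) :=
      Submodule.one_le_finrank_iff.2 hne
    have e1 := Submodule.eq_of_le_of_finrank_le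
      (inf_le_left : P.submodule ⊓ Q.submodule ≤ P.submodule)
      (by rw [P.finrank_submodule]; exact hr)
    have e2 := Submodule.eq_of_le_of_finrank_le
      (inf_le_right : P.submodule ⊓ Q.submodule ≤ Q.submodule)
      (by rw [Q.finrank_submodule]; exact hr)
    exact Projectivization.submodule_injective (e1.symm.trans e2)
  rw [hd, finrank_bot, P.finrank_submodule, Q.finrank_submodule] at h0
  exact h0

end aux

theorem stmt_2 {F : Type*} [Field F] [Fintype F] (q v l r : ℕ)
    (hq : Fintype.card F = q) (hlr : l ≤ r)
    (M : Projectivization F (Fin v → F) → ℕ)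
    (hdiv : IsDivisible (q ^ r) M)
    (hcard : MVal M ⊤ = q ^ l * gaussNum q (r + 1 - l)) :
    ∃ K : Submodule F (Fin v → F), Module.finrank F K = r + 1 - l ∧
      ∀ P, M P = if P.submodule ≤ K then q ^ l else 0 := by
  have : Finite (Projectivization F (Fin v → F)) := inferInstance
  let _ : Fintype (Projectivization F (Fin v → F)) := Fintype.ofFinite _
  have hq2 : 2 ≤ q := by rw [← hq]; exact Fintype.one_lt_card
  have hqz : (2 : ℤ) ≤ q := by exact_mod_cast hq2
  have hq0 : (q : ℤ) ≠ 0 := by positivity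
  obtain ⟨n, hn⟩ : ∃ n, n = MVal M ⊤ := ⟨_, rfl⟩
  -- n (q-1) = q^(r+1) - q^l
  have hnq : (n : ℤ) * (q - 1) = q ^ (r + 1) - q ^ l := by
    rw [hn, hcard]
    push_cast
    rw [mul_assoc, gauss_mul, mul_sub, ← pow_add, mul_one]
    congr 2; omega
  have hqr : (0 : ℤ) < (q : ℤ) ^ r := by positivity
  have hn2 : n < 2 * q ^ r := by
    have hl : (0 : ℤ) < (q : ℤ) ^ l := by positivity
    zify
    by_contra! hc
    rw [pow_succ] at hnq
    nlinarith
  have hnsum : n = ∑ P, M P := by rw [hn, MVal_eq]; simp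
  set W : Submodule F (Fin v → F) := ⨆ P ∈ {P : Projectivization F (Fin v → F) | 0 < M P},
    P.submodule with hW
  have hWle : ∀ P, 0 < M P → P.submodule ≤ W := fun P hP => le_iSup₂_of_le P hP le_rfl
  have key : ∀ f : Module.Dual F (Fin v → F),
      (MVal M (LinearMap.ker f) : ℤ) + q ^ r = n + q ^ r * (if W ≤ LinearMap.ker f then 1 else 0) := by
    intro f
    by_cases hf : W ≤ LinearMap.ker f
    · have : MVal M (LinearMap.ker f) = n := by
        rw [MVal_eq, hnsum]
        apply Finset.sum_congr rfl
        intro P _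
        split_ifs with h
        · rfl
        · by_contra h'
          exact h ((hWle P (Nat.pos_of_ne_zero fun h => h' h.symm)).trans hf)
      simp [hf, this]
    · have hlt : MVal M (LinearMap.ker f) < n := by
        have : ∃ P, 0 < M P ∧ ¬ P.submodule ≤ LinearMap.ker f := by
          by_contra! hc
          exact hf (iSup₂_le fun P hP => hc P hP)
        obtain ⟨P, hP, hPf⟩ := this
        rw [MVal_eq, hnsum]
        apply Finset.sum_lt_sum
        · intro Q _; split_ifs <;> simp
        · exact ⟨P, Finset.mem_univ _, by simp [hPf, hP]⟩
      have hf0 : f ≠ 0 := by rintro rfl; exact hf (by simp)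
      have hmod := hdiv (LinearMap.ker f) (Module.Dual.finrank_ker_add_one_of_ne_zero hf0)
      rw [← hn] at hmod
      obtain ⟨c, hc⟩ := (Nat.modEq_iff_dvd' hlt.le).1 hmod
      have hc1 : c = 1 := by
        have h1 : c ≠ 0 := by rintro rfl; simp at hc; omega
        have h2 : c < 2 := by
          by_contra! h2
          have : q ^ r * 2 ≤ q ^ r * c := Nat.mul_le_mul_left _ h2
          omega
        omega
      subst hc1
      simp only [hf, if_false]
      have : n = MVal M (LinearMap.ker f) + q ^ r := by omega
      rw [this]; push_cast; ring
  -- double counting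
  have dc : ∀ U : Submodule F (Fin v → F),
      ∑ Q, (M Q : ℤ) * annCard (U ⊔ Q.submodule) + q ^ r * annCard U
        = n * annCard U + q ^ r * annCard (U ⊔ W) := by
    intro U
    have h1 : ∑ Q, (M Q : ℤ) * annCard (U ⊔ Q.submodule) =
        ∑ f : Module.Dual F (Fin v → F), (if U ≤ LinearMap.ker f then 1 else 0) *
          (MVal M (LinearMap.ker f) : ℤ) := by
      simp only [annCard, Finset.mul_sum, MVal_eq]
      rw [Finset.sum_comm]
      apply Finset.sum_congr rfl
      intro f _
      push_cast
      rw [Finset.mul_sum]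
      apply Finset.sum_congr rfl
      intro Q _
      by_cases hU : U ≤ LinearMap.ker f <;> by_cases hQ : Q.submodule ≤ LinearMap.ker f <;>
        simp [hU, hQ]
    rw [h1]
    simp only [annCard, Finset.mul_sum, ← Finset.sum_add_distrib]
    apply Finset.sum_congr rfl
    intro f _
    have := key f
    by_cases hU : U ≤ LinearMap.ker f
    · by_cases hw : W ≤ LinearMap.ker f <;> simp [hU, hw] at this ⊢ <;> linarith
    · simp [hU]
  have hc1 : ∀ Q : Projectivization F (Fin v → F), annCard Q.submodule * q = (q : ℤ) ^ v := by
    intro Q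
    have := annCard_mul Q.submodule
    rwa [Q.finrank_submodule, hq, pow_one] at this
  have hc0 : annCard (⊥ : Submodule F (Fin v → F)) = (q : ℤ) ^ v := by
    have := annCard_mul (⊥ : Submodule F (Fin v → F))
    rwa [finrank_bot, hq, pow_zero, mul_one] at this
  have hcW := annCard_mul W
  rw [hq] at hcW
  set k := Module.finrank F W with hk
  have hqv : (q : ℤ) ^ v ≠ 0 := by positivity
  have hnz : (n : ℤ) = ∑ P, (M P : ℤ) := by rw [hnsum]; push_cast; rfl
  have hkl : k + l = r + 1 := by
    have h := dc ⊥
    simp only [bot_sup_eq] at h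
    rw [hc0] at h
    have hs : (∑ Q, (M Q : ℤ) * annCard Q.submodule) * q = n * q ^ v := by
      rw [hnz, Finset.sum_mul, Finset.sum_mul]
      apply Finset.sum_congr rfl
      intro Q _
      rw [mul_assoc, hc1]
    have h2 : (q : ℤ) ^ v * (q ^ (k + l)) = q ^ v * (q ^ (r + 1)) := by
      have e : ((∑ Q, (M Q : ℤ) * annCard Q.submodule) * q) * q ^ k + q ^ r * q ^ v * q * q ^ k
          = n * q ^ v * q * q ^ k + q ^ r * q * (annCard W * q ^ k) := by
        linear_combination (q : ℤ) * q ^ k * h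
      rw [hs, hcW] at e
      rw [pow_succ] at hnq ⊢
      rw [pow_add]
      linear_combination e + (q:ℤ) ^ v * q ^ k * hnq
    have h3 := mul_left_cancel₀ hqv h2
    exact Nat.pow_right_injective hq2 (by exact_mod_cast h3)
  refine ⟨W, by omega, fun P => ?_⟩
  split_ifs with hPW
  · have h := dc P.submodule
    rw [sup_eq_right.2 hPW] at h
    have hs : (∑ Q, (M Q : ℤ) * annCard (P.submodule ⊔ Q.submodule)) * q ^ 2
        = n * q ^ v + M P * (q - 1) * q ^ v := by
      have : ∀ Q, (M Q : ℤ) * annCard (P.submodule ⊔ Q.submodule) * q ^ 2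
          = M Q * q ^ v + (if Q = P then (M P : ℤ) * (q - 1) * q ^ v else 0) := by
        intro Q
        split_ifs with hQ
        · subst hQ
          rw [sup_idem]
          linear_combination (M Q : ℤ) * q * hc1 Q
        · have := annCard_mul (P.submodule ⊔ Q.submodule)
          rw [finrank_sup_points P Q (Ne.symm hQ), hq] at this
          rw [mul_assoc, this, add_zero]
      rw [Finset.sum_mul, Finset.sum_congr rfl fun Q _ => this Q, Finset.sum_add_distrib,
        ← Finset.sum_mul, ← hnz]
      simp
    have hP1 := hc1 P
    have hpow : (q : ℤ) ^ k * q ^ l = q ^ r * q := by rw [← pow_add, hkl, pow_succ]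
    have hqk : (q : ℤ) ^ k ≠ 0 := by positivity
    have hq1 : (q : ℤ) - 1 ≠ 0 := by omega
    have e : ((q : ℤ) ^ v * q ^ k * (q - 1)) * M P = ((q : ℤ) ^ v * q ^ k * (q - 1)) * q ^ l := by
      rw [pow_succ] at hnq
      linear_combination (q:ℤ)^2 * q^k * h - q^k * hs + (n - q^r) * q * q^k * hP1
        + q^r * q^2 * hcW + q^v * q^k * hnq - q^v * q * hpow
    have := mul_left_cancel₀ (mul_ne_zero (mul_ne_zero hqv hqk) hq1) e
    exact_mod_cast this
  · by_contra h
    exact hPW (hWle P (Nat.pos_of_ne_zero h))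
end

section
/- Let M be a 4-divisible multiset of points in PG(v-1,2) of cardinality 11. Then M = χ_E + 4·χ_P for some plane E (3-dimensional subspace) and some point P. In particular M has maximum point multiplicity at least 4. -/
open scoped Classical

namespace S8

def s (a : ZMod 2) : ℤ := if a = 0 then 1 else -1

lemma s_add : ∀ a b : ZMod 2, s (a + b) = s a * s b := by unfold s; decide
lemma s_cases : ∀ a : ZMod 2, (a = 0 ∧ s a = 1) ∨ (a ≠ 0 ∧ s a = -1) := by unfold s; decide
lemma s_one : s 1 = -1 := by unfold s; decide
lemma s_zero : s 0 = 1 := by unfold s; decide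

variable {v : ℕ}

def chi (f x : Fin v → ZMod 2) : ℤ := s (f ⬝ᵥ x)

lemma chi_addr (f x y : Fin v → ZMod 2) : chi f (x + y) = chi f x * chi f y := by
  simp [chi, dotProduct_add, s_add]
lemma chi_addl (f g x : Fin v → ZMod 2) : chi (f + g) x = chi f x * chi g x := by
  simp [chi, add_dotProduct, s_add]
lemma chi_zero (f : Fin v → ZMod 2) : chi f 0 = 1 := by simp [chi, s_zero]
lemma chi_zerol (f : Fin v → ZMod 2) : chi 0 f = 1 := by simp [chi, s_zero]
lemma chi_cases (f x : Fin v → ZMod 2) : chi f x = 1 ∨ chi f x = -1 := by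
  rcases s_cases (f ⬝ᵥ x) with h | h
  · exact Or.inl h.2
  · exact Or.inr h.2

lemma add_self' (x : Fin v → ZMod 2) : x + x = 0 := by
  funext i
  exact CharTwo.add_self_eq_zero (x i)

lemma sum_chi (x : Fin v → ZMod 2) (hx : x ≠ 0) : ∑ f, chi f x = 0 := by
  obtain ⟨i, hi⟩ := Function.ne_iff.mp hx
  have h1 : x i = 1 := by
    have : ∀ a : ZMod 2, a ≠ 0 → a = 1 := by decide
    exact this _ hi
  have h := Equiv.sum_comp (Equiv.addRight (Pi.single i (1 : ZMod 2) : Fin v → ZMod 2))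
    (fun f => chi f x)
  have h2 : ∀ f, chi (f + Pi.single i 1) x = - chi f x := by
    intro f
    rw [chi_addl]
    have : chi (Pi.single i 1) x = -1 := by simp [chi, h1, s_one]
    rw [this]; ring
  simp only [Equiv.coe_addRight, h2, Finset.sum_neg_distrib] at h
  omega

/-- Fourier transform -/
def T (m : (Fin v → ZMod 2) → ℤ) (f : Fin v → ZMod 2) : ℤ := ∑ x, m x * chi f x

lemma inversion (m : (Fin v → ZMod 2) → ℤ) (x : Fin v → ZMod 2) :
    ∑ f, T m f * chi f x = 2 ^ v * m x := by
  unfold T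
  simp_rw [Finset.sum_mul]
  rw [Finset.sum_comm]
  rw [Finset.sum_eq_single x]
  · have : ∀ f, m x * chi f x * chi f x = m x := by
      intro f
      rcases chi_cases f x with h | h <;> rw [h] <;> ring
    simp [this]
  · intro y _ hy
    have : ∀ f, m y * chi f y * chi f x = m y * chi f (y + x) := by
      intro f; rw [chi_addr]; ring
    simp_rw [this]
    rw [← Finset.mul_sum, sum_chi, mul_zero]
    intro h
    apply hy
    have h2 : y + x + x = x := by rw [h, zero_add]
    rwa [add_assoc, add_self', add_zero] at h2
  · simp

lemma sum_chi_all (x : Fin v → ZMod 2) : ∑ f, chi f x = if x = 0 then 2 ^ v else 0 := by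
  split_ifs with h
  · subst h; simp [chi_zero]
  · exact sum_chi x h

/-- the seven-point part -/
lemma seven (m : (Fin v → ZMod 2) → ℤ) (h0 : m 0 = 0) (h01 : ∀ x, m x = 0 ∨ m x = 1)
    (hs : ∑ x, m x = 7) (hT : ∀ f, T m f = 7 ∨ T m f = -1) :
    ∃ E : Submodule (ZMod 2) (Fin v → ZMod 2), Module.finrank (ZMod 2) E = 3 ∧
      ∀ x, x ≠ 0 → m x = if x ∈ E then 1 else 0 := by
  let g : (Fin v → ZMod 2) → ℤ := fun f => if T m f = 7 then 1 else 0
  have hg : ∀ f, T m f = -1 + 8 * g f := by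
    intro f
    rcases hT f with h | h <;> simp [g, h]
  have hN : (0 : ℤ) < 2 ^ v := by positivity
  have key : ∀ x, 2 ^ v * m x = -(if x = 0 then 2 ^ v else 0) + 8 * ∑ f, g f * chi f x := by
    intro x
    rw [← inversion, ← sum_chi_all, Finset.mul_sum, ← Finset.sum_neg_distrib,
      ← Finset.sum_add_distrib]
    refine Finset.sum_congr rfl fun f _ => ?_
    rw [hg]; ring
  have k0 : 2 ^ v = 8 * ∑ f, g f := by
    have := key 0
    simp only [h0, chi_zero, mul_one, if_true] at this
    linarith
  let E : Submodule (ZMod 2) (Fin v → ZMod 2) :=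
    { carrier := {x | ∀ f, T m f = 7 → f ⬝ᵥ x = 0}
      add_mem' := by
        intro a b ha hb f hf
        rw [dotProduct_add, ha f hf, hb f hf, add_zero]
      zero_mem' := by intro f _; simp
      smul_mem' := by
        intro c x hx f hf
        rw [dotProduct_smul, hx f hf, smul_zero] }
  have hE : ∀ x, x ∈ E ↔ ∀ f, T m f = 7 → f ⬝ᵥ x = 0 := fun x => Iff.rfl
  have hm : ∀ x, x ≠ 0 → m x = if x ∈ E then 1 else 0 := by
    intro x hx
    have kx := key x
    rw [if_neg hx] at kx
    split_ifs with hxE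
    · have : ∑ f, g f * chi f x = ∑ f, g f := by
        refine Finset.sum_congr rfl fun f _ => ?_
        by_cases h : T m f = 7
        · simp [chi, (hE x).1 hxE f h, s_zero]
        · simp [g, h]
      rw [this] at kx
      have : 2 ^ v * m x = 2 ^ v * 1 := by linarith
      exact mul_left_cancel₀ hN.ne' this
    · rcases h01 x with h | h
      · exact h
      exfalso
      apply hxE
      have e : ∑ f, g f * (1 - chi f x) = 0 := by
        simp_rw [mul_sub, mul_one]
        rw [Finset.sum_sub_distrib]
        rw [h] at kx
        linarith
      rw [Finset.sum_eq_zero_iff_of_nonneg] at e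
      · intro f hf
        have := e f (Finset.mem_univ _)
        simp only [g, hf, if_true, one_mul] at this
        rcases s_cases (f ⬝ᵥ x) with h | h
        · exact h.1
        · simp [chi, h.2] at this
      · intro f _
        apply mul_nonneg
        · simp only [g]; split_ifs <;> norm_num
        · rcases chi_cases f x with h | h <;> rw [h] <;> norm_num
  refine ⟨E, ?_, hm⟩
  have hc : (Fintype.card E : ℤ) = 8 := by
    have h1 : (Fintype.card E : ℤ) = ∑ x, if x ∈ E then (1 : ℤ) else 0 := by
      rw [Fintype.card_subtype]; simp
    have h2 : ∀ x, (if x ∈ E then (1 : ℤ) else 0) = m x + if x = 0 then 1 else 0 := by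
      intro x
      by_cases hx : x = 0
      · subst hx; simp [h0]
      · rw [hm x hx]; simp [hx]
    rw [h1]
    simp_rw [h2]
    rw [Finset.sum_add_distrib, hs]
    simp
  have h3 := Module.card_eq_pow_finrank (K := ZMod 2) (V := E)
  rw [ZMod.card] at h3
  have h4 : 2 ^ Module.finrank (ZMod 2) E = 2 ^ 3 := by
    rw [← h3]; exact_mod_cast hc
  exact Nat.pow_right_injective le_rfl h4

lemma core (m : (Fin v → ZMod 2) → ℤ) (h0 : m 0 = 0) (hpos : ∀ x, 0 ≤ m x)
    (hs : ∑ x, m x = 11) (hT : ∀ f, T m f = 11 ∨ T m f = 3 ∨ T m f = -5) :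
    ∃ (E : Submodule (ZMod 2) (Fin v → ZMod 2)) (P : Fin v → ZMod 2), P ≠ 0 ∧
      Module.finrank (ZMod 2) E = 3 ∧
      ∀ x, x ≠ 0 → m x = (if x ∈ E then 1 else 0) + if x = P then 4 else 0 := by
  let g : (Fin v → ZMod 2) → ℤ := fun f => if T m f = 11 then 1 else 0
  let k : (Fin v → ZMod 2) → ℤ := fun f => if T m f = -5 then 1 else 0
  have hg : ∀ f, T m f = 3 + 8 * g f - 8 * k f := by
    intro f
    rcases hT f with h | h | h <;> simp [g, k, h]
  have hk0 : ∀ f, 0 ≤ k f := by intro f; simp only [k]; split_ifs <;> norm_num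
  have hN : (0 : ℤ) < 2 ^ v := by positivity
  let G : (Fin v → ZMod 2) → ℤ := fun x => ∑ f, k f * chi f x
  let a : ℤ := ∑ f, g f
  let A : ℤ := ∑ f, k f
  have key : ∀ x, 2 ^ v * m x = 3 * (if x = 0 then 2 ^ v else 0) + 8 * ∑ f, g f * chi f x
      - 8 * G x := by
    intro x
    rw [← inversion, ← sum_chi_all, Finset.mul_sum, Finset.mul_sum, Finset.mul_sum,
      ← Finset.sum_add_distrib, ← Finset.sum_sub_distrib]
    refine Finset.sum_congr rfl fun f _ => ?_
    rw [hg]; ring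
  have k0 : 8 * A = 3 * 2 ^ v + 8 * a := by
    have := key 0
    simp only [h0, chi_zero, mul_one, if_true, G] at this
    simp only [A, a]
    linarith
  -- functionals with `T = 11` vanish on the support
  have hW0 : ∀ f, T m f = 11 → ∀ x, m x * chi f x = m x := by
    intro f hf x
    have e : ∑ x, m x * (1 - chi f x) = 0 := by
      simp_rw [mul_sub, mul_one]
      rw [Finset.sum_sub_distrib, hs]
      unfold T at hf
      linarith
    rw [Finset.sum_eq_zero_iff_of_nonneg] at e
    · have := e x (Finset.mem_univ _)
      linarith
    · intro x _
      apply mul_nonneg (hpos x)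
      rcases chi_cases f x with h | h <;> rw [h] <;> norm_num
  have hmG : ∀ x, m x * (8 * G x) = m x * (8 * a - 2 ^ v * m x) := by
    intro x
    by_cases hx : x = 0
    · subst hx; simp [h0]
    have kx := key x
    rw [if_neg hx] at kx
    have : m x * ∑ f, g f * chi f x = m x * a := by
      simp only [a]
      rw [Finset.mul_sum, Finset.mul_sum]
      refine Finset.sum_congr rfl fun f _ => ?_
      by_cases h : T m f = 11
      · have := hW0 f h x
        simp only [g, h, if_true, one_mul, mul_one]
        exact this
      · simp [g, h]
    linear_combination m x * kx + 8 * this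
  have M1 : ∑ x, m x * G x = -5 * A := by
    simp only [G, A]
    simp_rw [Finset.mul_sum]
    rw [Finset.sum_comm]
    refine Finset.sum_congr rfl fun f _ => ?_
    have : ∑ x, m x * (k f * chi f x) = k f * T m f := by
      unfold T; rw [Finset.mul_sum]
      refine Finset.sum_congr rfl fun x _ => by ring
    rw [this]
    by_cases h : T m f = -5
    · rw [h]; ring
    · simp [k, h]
  have hadd : ∀ f w, T m w = 11 → T m (f + w) = T m f := by
    intro f w hw
    unfold T
    refine Finset.sum_congr rfl fun x _ => ?_
    rw [chi_addl]
    have := hW0 w hw x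
    linear_combination chi f x * this
  have hkk : ∀ f f', k f * k f' * T m (f + f') = k f * k f' * (3 + 8 * g (f + f')) := by
    intro f f'
    by_cases h : T m f = -5
    swap
    · simp [k, h]
    by_cases h' : T m f' = -5
    swap
    · simp [k, h']
    have : T m (f + f') ≠ -5 := by
      have e : 0 ≤ ∑ x, m x * (1 + chi f x + chi f' x + chi (f + f') x) := by
        apply Finset.sum_nonneg
        intro x _
        apply mul_nonneg (hpos x)
        rw [chi_addl]
        rcases chi_cases f x with h | h <;> rcases chi_cases f' x with h' | h' <;>
          rw [h, h'] <;> norm_num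
      simp_rw [mul_add, mul_one] at e
      rw [Finset.sum_add_distrib, Finset.sum_add_distrib, Finset.sum_add_distrib, hs] at e
      change 0 ≤ 11 + T m f + T m f' + T m (f + f') at e
      intro h3
      rw [h, h', h3] at e
      norm_num at e
    rw [hg (f + f')]
    have hz : k (f + f') = 0 := by simp [k, this]
    rw [hz]; ring
  have hconv : ∀ f, ∑ f', k f * k f' * g (f + f') = k f * a := by
    intro f
    have := Equiv.sum_comp (Equiv.addLeft f) (fun f' => k f * k f' * g (f + f'))
    rw [← this]
    simp only [a, Equiv.coe_addLeft]
    rw [Finset.mul_sum]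
    refine Finset.sum_congr rfl fun w _ => ?_
    rw [← add_assoc, add_self', zero_add]
    by_cases h : T m w = 11
    · have e : k (f + w) = k f := by simp only [k, hadd f w h]
      rw [e]
      have : k f * k f = k f := by simp only [k]; split_ifs <;> norm_num
      rw [this]
    · simp [g, h]
  have M2 : ∑ x, m x * (G x * G x) = 3 * A * A + 8 * A * a := by
    have e1 : ∑ x, m x * (G x * G x) = ∑ f, ∑ f', k f * k f' * T m (f + f') := by
      simp only [G, T]
      simp_rw [Finset.sum_mul_sum, Finset.mul_sum]
      rw [Finset.sum_comm]
      refine Finset.sum_congr rfl fun f _ => ?_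
      rw [Finset.sum_comm]
      refine Finset.sum_congr rfl fun f' _ => ?_
      refine Finset.sum_congr rfl fun x _ => ?_
      rw [chi_addl]; ring
    rw [e1]
    have e2 : ∀ f, ∑ f', k f * k f' * T m (f + f') = 3 * A * k f + 8 * a * k f := by
      intro f
      have : ∑ f', k f * k f' * T m (f + f')
          = 3 * k f * ∑ f', k f' + 8 * ∑ f', k f * k f' * g (f + f') := by
        rw [Finset.mul_sum, Finset.mul_sum, ← Finset.sum_add_distrib]
        refine Finset.sum_congr rfl fun f' _ => ?_
        rw [hkk]; ring
      rw [this, hconv]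
      simp only [A]; ring
    simp_rw [e2]
    rw [Finset.sum_add_distrib, ← Finset.mul_sum, ← Finset.mul_sum]
    simp only [A]; ring
  have hAG : ∀ x, 0 ≤ A + G x := by
    intro x
    simp only [A, G]
    rw [← Finset.sum_add_distrib]
    apply Finset.sum_nonneg
    intro f _
    have := hk0 f
    rcases chi_cases f x with h | h <;> rw [h] <;> linarith
  have tot : ∑ x, m x * ((A + G x) * (8 * a - 2 ^ v - 8 * G x)) = 0 := by
    have : ∀ x, m x * ((A + G x) * (8 * a - 2 ^ v - 8 * G x)) =
        (A * (8 * a - 2 ^ v)) * m x + (8 * a - 2 ^ v - 8 * A) * (m x * G x)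
          - 8 * (m x * (G x * G x)) := by
      intro x; ring
    simp_rw [this]
    rw [Finset.sum_sub_distrib, Finset.sum_add_distrib, ← Finset.mul_sum, ← Finset.mul_sum,
      ← Finset.mul_sum, hs, M1, M2]
    linear_combination (2 * A) * k0
  have tot2 : ∀ x, m x * ((A + G x) * (8 * a - 2 ^ v - 8 * G x)) =
      (A + G x) * (2 ^ v * (m x * (m x - 1))) := by
    intro x
    linear_combination (-(A + G x)) * hmG x
  have hmm : ∀ x, 0 ≤ m x * (m x - 1) := by
    intro x
    have := hpos x
    rcases this.eq_or_lt with h | h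
    · rw [← h]; norm_num
    · exact mul_nonneg this (by omega)
  have dich : ∀ x, (A + G x) * (2 ^ v * (m x * (m x - 1))) = 0 := by
    simp_rw [tot2] at tot
    rw [Finset.sum_eq_zero_iff_of_nonneg] at tot
    · exact fun x => tot x (Finset.mem_univ _)
    · intro x _
      exact mul_nonneg (hAG x) (mul_nonneg hN.le (hmm x))
  have ha : 0 ≤ a := Finset.sum_nonneg fun f _ => by
    simp only [g]; split_ifs <;> norm_num
  have Seq : 2 ^ v * ∑ x, m x * (m x - 1) = 128 * a + 4 * 2 ^ v := by
    have e : ∑ x, m x * (8 * G x) = ∑ x, m x * (8 * a - 2 ^ v * m x) :=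
      Finset.sum_congr rfl fun x _ => hmG x
    have e1 : ∑ x, m x * (8 * G x) = 8 * ∑ x, m x * G x := by
      rw [Finset.mul_sum]; exact Finset.sum_congr rfl fun x _ => by ring
    have e2 : ∑ x, m x * (8 * a - 2 ^ v * m x) =
        (8 * a - 2 ^ v) * ∑ x, m x - 2 ^ v * ∑ x, m x * (m x - 1) := by
      have e3 : ∀ x, m x * (8 * a - 2 ^ v * m x) =
          (8 * a - 2 ^ v) * m x - 2 ^ v * (m x * (m x - 1)) := fun x => by ring
      simp_rw [e3]
      rw [Finset.sum_sub_distrib, ← Finset.mul_sum, ← Finset.mul_sum]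
    rw [e1, e2, M1, hs] at e
    linarith
  obtain ⟨P, hP⟩ : ∃ P, m P * (m P - 1) ≠ 0 := by
    by_contra hcon
    push Not at hcon
    simp_rw [hcon] at Seq
    simp at Seq
    linarith
  have hP0 : m P ≠ 0 := left_ne_zero_of_mul hP
  have hPz : P ≠ 0 := by rintro rfl; exact hP0 h0
  have hAGP : A + G P = 0 := by
    rcases mul_eq_zero.mp (dich P) with h | h
    · exact h
    · exact absurd h (mul_ne_zero hN.ne' hP)
  have hGP : 8 * G P = 8 * a - 2 ^ v * m P := mul_left_cancel₀ hP0 (hmG P)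
  have h16 : 16 * a = (m P - 3) * 2 ^ v := by linarith
  have hsum : ∑ x, m x * (m x - 1) = 8 * m P - 20 := by
    apply mul_left_cancel₀ hN.ne'
    rw [Seq]; linear_combination 8 * h16
  rw [← Finset.add_sum_erase _ _ (Finset.mem_univ P)] at hsum
  have hrest : ∑ x ∈ Finset.univ.erase P, m x * (m x - 1) = -((m P - 4) * (m P - 5)) := by
    linarith
  have hnn : 0 ≤ (m P - 4) * (m P - 5) := by
    by_cases h : m P ≤ 4
    · nlinarith
    · have : 5 ≤ m P := by omega
      nlinarith
  have hr0 : ∑ x ∈ Finset.univ.erase P, m x * (m x - 1) = 0 := by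
    apply le_antisymm
    · linarith
    · exact Finset.sum_nonneg fun x _ => hmm x
  have hP45 : m P = 4 ∨ m P = 5 := by
    have : (m P - 4) * (m P - 5) = 0 := by linarith
    rcases mul_eq_zero.mp this with h | h
    · left; linarith
    · right; linarith
  have hoth : ∀ x, x ≠ P → m x = 0 ∨ m x = 1 := by
    intro x hx
    rw [Finset.sum_eq_zero_iff_of_nonneg (fun x _ => hmm x)] at hr0
    have := hr0 x (Finset.mem_erase.mpr ⟨hx, Finset.mem_univ _⟩)
    rcases mul_eq_zero.mp this with h | h
    · left; exact h
    · right; linarith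
  let m' : (Fin v → ZMod 2) → ℤ := fun x => m x - if x = P then 4 else 0
  have h01 : ∀ x, m' x = 0 ∨ m' x = 1 := by
    intro x
    by_cases hx : x = P
    · subst hx
      rcases hP45 with h | h <;> simp [m', h]
    · simpa [m', hx] using hoth x hx
  have hs' : ∑ x, m' x = 7 := by
    simp only [m']
    rw [Finset.sum_sub_distrib, hs]
    simp
  have hT' : ∀ f, T m' f = T m f - 4 * chi f P := by
    intro f
    simp only [T, m', sub_mul, Finset.sum_sub_distrib]
    simp
  have hb : ∀ f, -7 ≤ T m' f ∧ T m' f ≤ 7 := by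
    intro f
    constructor
    · rw [← hs', ← Finset.sum_neg_distrib]
      unfold T
      apply Finset.sum_le_sum
      intro x _
      rcases h01 x with h | h <;> rcases chi_cases f x with h' | h' <;> rw [h, h'] <;> norm_num
    · rw [← hs']
      unfold T
      apply Finset.sum_le_sum
      intro x _
      rcases h01 x with h | h <;> rcases chi_cases f x with h' | h' <;> rw [h, h'] <;> norm_num
  obtain ⟨E, hE, hEm⟩ := seven m' (by simp [m', h0, hPz.symm]) h01 hs' (by
    intro f
    have h1 := hb f
    have h2 := hT' f
    rcases hT f with h | h | h <;> rcases chi_cases f P with h' | h' <;> rw [h, h'] at h2 <;>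
      omega)
  refine ⟨E, P, hPz, hE, fun x hx => ?_⟩
  rw [← hEm x hx]
  simp [m']

lemma mk_inj {x y : Fin v → ZMod 2} (hx : x ≠ 0) (hy : y ≠ 0)
    (h : Projectivization.mk (ZMod 2) x hx = Projectivization.mk (ZMod 2) y hy) : x = y := by
  rw [Projectivization.mk_eq_mk_iff'] at h
  obtain ⟨c, hc⟩ := h
  have h2 : ∀ c : ZMod 2, c = 0 ∨ c = 1 := by decide
  rcases h2 c with rfl | rfl
  · simp at hc; exact absurd hc.symm hx
  · simpa using hc.symm

lemma mk_le {x : Fin v → ZMod 2} (hx : x ≠ 0) (K : Submodule (ZMod 2) (Fin v → ZMod 2)) :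
    (Projectivization.mk (ZMod 2) x hx).submodule ≤ K ↔ x ∈ K := by
  rw [Projectivization.submodule_mk, Submodule.span_singleton_le_iff_mem]

noncomputable def mm (M : Projectivization (ZMod 2) (Fin v → ZMod 2) → ℕ)
    (x : Fin v → ZMod 2) : ℕ :=
  if h : x ≠ 0 then M (Projectivization.mk (ZMod 2) x h) else 0

lemma mval_eq (M : Projectivization (ZMod 2) (Fin v → ZMod 2) → ℕ)
    (K : Submodule (ZMod 2) (Fin v → ZMod 2)) :
    MVal M K = ∑ x, if x ∈ K then mm M x else 0 := by
  unfold MVal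
  have hbij : Function.Bijective (fun x : {x : Fin v → ZMod 2 // x ≠ 0} =>
      Projectivization.mk (ZMod 2) x.1 x.2) := by
    constructor
    · intro x y h
      exact Subtype.ext (mk_inj x.2 y.2 h)
    · intro P
      exact ⟨⟨P.rep, P.rep_nonzero⟩, P.mk_rep⟩
  rw [finsum_mem_def, ← finsum_comp_equiv (Equiv.ofBijective _ hbij), finsum_eq_sum_of_fintype]
  have h1 : ∑ x, (if x ∈ K then mm M x else 0) =
      ∑ x : {x : Fin v → ZMod 2 // x ≠ 0}, if x.1 ∈ K then mm M x.1 else 0 := by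
    rw [← Finset.sum_subtype (Finset.univ.filter (· ≠ 0)) (by simp)
      (fun x => if x ∈ K then mm M x else 0)]
    symm
    apply Finset.sum_filter_of_ne
    rintro x _ hx rfl
    simp [mm] at hx
  rw [h1]
  refine Finset.sum_congr rfl fun x _ => ?_
  rw [Set.indicator_apply]
  simp only [Equiv.ofBijective_apply, Set.mem_setOf_eq, mk_le, mm, dif_pos x.2]

end S8

theorem stmt_8 (v : ℕ) (M : Projectivization (ZMod 2) (Fin v → ZMod 2) → ℕ)
    (hdiv : IsDivisible 4 M) (hcard : MVal M ⊤ = 11) :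
    (∃ (E : Submodule (ZMod 2) (Fin v → ZMod 2))
        (P : Projectivization (ZMod 2) (Fin v → ZMod 2)),
      Module.finrank (ZMod 2) E = 3 ∧
      ∀ Q, M Q = (if Q.submodule ≤ E then 1 else 0) + (if Q = P then 4 else 0)) ∧
    (∃ P, 4 ≤ M P) := by
  have hs : ∑ x, S8.mm M x = 11 := by
    rw [← hcard, S8.mval_eq]; simp
  have hT : ∀ f, S8.T (fun x => (S8.mm M x : ℤ)) f = 11 ∨
      S8.T (fun x => (S8.mm M x : ℤ)) f = 3 ∨ S8.T (fun x => (S8.mm M x : ℤ)) f = -5 := by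
    intro f
    by_cases hf : f = 0
    · left
      subst hf
      simp only [S8.T, S8.chi_zerol, mul_one]
      exact_mod_cast hs
    let φ : Module.Dual (ZMod 2) (Fin v → ZMod 2) := dotProductBilin (ZMod 2) (ZMod 2) f
    have hφ : ∀ x, φ x = f ⬝ᵥ x := fun x => rfl
    have hφ0 : φ ≠ 0 := by
      intro h
      apply hf
      funext i
      have := LinearMap.congr_fun h (Pi.single i 1)
      rw [hφ] at this
      simpa using this
    have hd := hdiv (LinearMap.ker φ) (Module.Dual.finrank_ker_add_one_of_ne_zero hφ0)
    rw [hcard, S8.mval_eq] at hd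
    set w := ∑ x, if x ∈ LinearMap.ker φ then S8.mm M x else 0 with hw
    have hle : w ≤ 11 := by
      rw [← hs]
      apply Finset.sum_le_sum
      intro x _
      split_ifs <;> simp
    have he : S8.T (fun x => (S8.mm M x : ℤ)) f = 2 * w - 11 := by
      have hs' : (11 : ℤ) = ∑ x, (S8.mm M x : ℤ) := by exact_mod_cast hs.symm
      rw [hs', hw]
      push_cast
      rw [Finset.mul_sum, ← Finset.sum_sub_distrib]
      unfold S8.T
      refine Finset.sum_congr rfl fun x _ => ?_
      rw [LinearMap.mem_ker, hφ, S8.chi]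
      rcases S8.s_cases (f ⬝ᵥ x) with h | h
      · rw [h.2, if_pos h.1]; ring
      · rw [h.2, if_neg h.1]; ring
    rw [he]
    unfold Nat.ModEq at hd
    omega
  obtain ⟨E, P, hP, hE, hm⟩ := S8.core (fun x => (S8.mm M x : ℤ)) (by simp [S8.mm])
    (fun x => by positivity) (by exact_mod_cast hs) hT
  have main : ∀ Q, M Q = (if Q.submodule ≤ E then 1 else 0) +
      (if Q = Projectivization.mk (ZMod 2) P hP then 4 else 0) := by
    intro Q
    have h := hm Q.rep Q.rep_nonzero
    have h1 : S8.mm M Q.rep = M Q := by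
      simp [S8.mm, Q.rep_nonzero, Q.mk_rep]
    have h2 : Q.submodule ≤ E ↔ Q.rep ∈ E := by
      conv_lhs => rw [← Q.mk_rep]
      exact S8.mk_le Q.rep_nonzero E
    have h3 : Q = Projectivization.mk (ZMod 2) P hP ↔ Q.rep = P := by
      constructor
      · intro h
        rw [← Q.mk_rep] at h
        exact S8.mk_inj _ _ h
      · intro h
        subst h
        exact Q.mk_rep.symm
    simp only [h1] at h
    simp only [h2, h3]
    exact_mod_cast h
  refine ⟨⟨E, _, hE, main⟩, ⟨Projectivization.mk (ZMod 2) P hP, ?_⟩⟩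
  rw [main]
  simp
end

section
/- Let M be a 4-divisible multiset of points in PG(v-1,2) of cardinality 13. Then either M = χ_E + 2·χ_L for a plane E and a line L, or there exists a projective base B_5 of size 5 and a point C outside its span such that M(C)=3, M(Q)=1 for every point Q ≠ C lying on a line through C and a point of B_5, and M(Q)=0 otherwise. -/
open scoped Classical

namespace S10

/-! ### Doubly-even binary codes -/

/-- Hamming weight of a binary word. -/
def wt {ι : Type*} [Fintype ι] (c : ι → ZMod 2) : ℕ := ∑ i, (c i).val

/-- Size of the intersection of the supports. -/
def ov {ι : Type*} [Fintype ι] (c d : ι → ZMod 2) : ℕ := ∑ i, (c i * d i).val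

lemma val_add_aux : ∀ a b : ZMod 2, (a + b).val + 2 * (a * b).val = a.val + b.val := by decide

lemma wt_add {ι : Type*} [Fintype ι] (c d : ι → ZMod 2) :
    wt (c + d) + 2 * ov c d = wt c + wt d := by
  simp only [wt, ov, Finset.mul_sum, ← Finset.sum_add_distrib, Pi.add_apply, val_add_aux]

lemma cast_ov {ι : Type*} [Fintype ι] (c d : ι → ZMod 2) : ((ov c d : ℕ) : ZMod 2) = c ⬝ᵥ d := by
  simp [ov, dotProduct]

lemma even_ov {ι : Type*} [Fintype ι] (c d : ι → ZMod 2) : 2 ∣ ov c d ↔ c ⬝ᵥ d = 0 := by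
  rw [← cast_ov, ZMod.natCast_eq_zero_iff]

lemma cast_wt {ι : Type*} [Fintype ι] (c : ι → ZMod 2) : ((wt c : ℕ) : ZMod 2) = c ⬝ᵥ 1 := by
  simp [wt, dotProduct]

lemma z2_cases : ∀ a : ZMod 2, a = 0 ∨ a = 1 := by decide

/-- Doubly-even code. -/
def DE {ι : Type*} [Fintype ι] (C : Submodule (ZMod 2) (ι → ZMod 2)) : Prop :=
  ∀ c ∈ C, 4 ∣ wt c

lemma DE.dot {ι : Type*} [Fintype ι] {C : Submodule (ZMod 2) (ι → ZMod 2)} (h : DE C)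
    {c d : ι → ZMod 2} (hc : c ∈ C) (hd : d ∈ C) : c ⬝ᵥ d = 0 := by
  rw [← even_ov]
  have h1 := h c hc
  have h2 := h d hd
  have h3 := h _ (C.add_mem hc hd)
  have := wt_add c d
  omega

/-- dot product form -/
noncomputable def dotB (ι : Type*) [Fintype ι] :
    LinearMap.BilinForm (ZMod 2) (ι → ZMod 2) := dotProductBilin (ZMod 2) (ZMod 2)

lemma dotB_apply {ι : Type*} [Fintype ι] (x y : ι → ZMod 2) : dotB ι x y = x ⬝ᵥ y := rfl

lemma finrank_orth {ι : Type*} [Fintype ι] (C : Submodule (ZMod 2) (ι → ZMod 2)) :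
    Module.finrank (ZMod 2) C + Module.finrank (ZMod 2) ((dotB ι).orthogonal C)
      = Fintype.card ι := by
  have hn : (dotB ι).Nondegenerate := by
    constructor
    · intro x h
      exact dotProduct_eq_zero x h
    · intro x h
      refine dotProduct_eq_zero x fun w => ?_
      rw [dotProduct_comm]; exact h w
  have := LinearMap.BilinForm.finrank_orthogonal hn C
  have h2 := Submodule.finrank_le C
  simp at this h2
  omega

lemma mem_orth {ι : Type*} [Fintype ι] {C : Submodule (ZMod 2) (ι → ZMod 2)} {z : ι → ZMod 2} :
    z ∈ (dotB ι).orthogonal C ↔ ∀ c ∈ C, c ⬝ᵥ z = 0 := by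
  rw [LinearMap.BilinForm.mem_orthogonal_iff]; rfl

lemma DE.finrank_le {C : Submodule (ZMod 2) (Fin 13 → ZMod 2)} (h : DE C) :
    Module.finrank (ZMod 2) C ≤ 6 := by
  have h1 := finrank_orth C
  have h2 : C ≤ (dotB _).orthogonal C := fun z hz => mem_orth.2 fun c hc => h.dot hc hz
  have := Submodule.finrank_mono h2
  simp at h1
  omega

lemma exists_not_mem {A B : Submodule (ZMod 2) (Fin 13 → ZMod 2)}
    (h : Module.finrank (ZMod 2) A < Module.finrank (ZMod 2) B) : ∃ u ∈ B, u ∉ A := by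
  by_contra hc
  push Not at hc
  have := Submodule.finrank_mono (show B ≤ A from hc)
  omega

lemma finrank_sup_span_le (A : Submodule (ZMod 2) (Fin 13 → ZMod 2)) (u : Fin 13 → ZMod 2) :
    Module.finrank (ZMod 2) (A ⊔ Submodule.span (ZMod 2) {u} : Submodule _ _)
      ≤ Module.finrank (ZMod 2) A + 1 := by
  have h1 := Submodule.finrank_add_le_finrank_add_finrank A (Submodule.span (ZMod 2) {u})
  have h2 := finrank_span_le_card (R := ZMod 2) ({u} : Set (Fin 13 → ZMod 2))
  simp at h2
  omega

lemma DE.extend {C : Submodule (ZMod 2) (Fin 13 → ZMod 2)} (h : DE C)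
    (hk : Module.finrank (ZMod 2) C ≤ 4) : ∃ C', DE C' ∧ C < C' := by
  set D := C ⊔ Submodule.span (ZMod 2) {(1 : Fin 13 → ZMod 2)} with hD
  have hDr := finrank_sup_span_le C 1
  rw [← hD] at hDr
  have hO := finrank_orth D
  simp only [Fintype.card_fin] at hO
  set O := (dotB (Fin 13)).orthogonal D with hOdef
  have hOC : ∀ z ∈ O, ∀ c ∈ C, c ⬝ᵥ z = 0 := fun z hz c hc =>
    mem_orth.1 hz c (Submodule.mem_sup_left hc)
  have hO1 : ∀ z ∈ O, 2 ∣ wt z := fun z hz => by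
    have := mem_orth.1 hz 1 (Submodule.mem_sup_right (Submodule.mem_span_singleton_self _))
    rw [dotProduct_comm, ← cast_wt, ZMod.natCast_eq_zero_iff] at this
    exact this
  have key : ∃ z ∈ O, z ∉ C ∧ 4 ∣ wt z := by
    by_contra hcon
    push Not at hcon
    have ho : ∀ u ∈ O, ∀ v ∈ O, u ∉ C → v ∉ C → u + v ∉ C → u ⬝ᵥ v = 1 := by
      intro u hu v hv huC hvC huv
      have a1 := hcon u hu huC
      have a2 := hcon v hv hvC
      have a3 := hcon _ (O.add_mem hu hv) huv
      have b1 := hO1 u hu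
      have b2 := hO1 v hv
      have b3 := hO1 _ (O.add_mem hu hv)
      have := wt_add u v
      have h2 : ¬ 2 ∣ ov u v := by omega
      rw [even_ov] at h2
      revert h2
      generalize u ⬝ᵥ v = t
      revert t; decide
    obtain ⟨u, hu, huC⟩ := exists_not_mem (A := C) (B := O) (by omega)
    have r1 := finrank_sup_span_le C u
    obtain ⟨v, hv, hvC⟩ := exists_not_mem (A := C ⊔ Submodule.span (ZMod 2) {u}) (B := O) (by omega)
    have r2 := finrank_sup_span_le (C ⊔ Submodule.span (ZMod 2) {u}) v
    obtain ⟨w, hw, hwC⟩ := exists_not_mem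
      (A := C ⊔ Submodule.span (ZMod 2) {u} ⊔ Submodule.span (ZMod 2) {v}) (B := O) (by omega)
    set A := C ⊔ Submodule.span (ZMod 2) {u} with hA
    set A' := A ⊔ Submodule.span (ZMod 2) {v} with hA'
    have cA : C ≤ A := le_sup_left
    have cA' : A ≤ A' := le_sup_left
    have uA : u ∈ A := Submodule.mem_sup_right (Submodule.mem_span_singleton_self _)
    have vA : v ∈ A' := Submodule.mem_sup_right (Submodule.mem_span_singleton_self _)
    have vC : v ∉ C := fun hh => hvC (cA hh)
    have wC : w ∉ C := fun hh => hwC (cA' (cA hh))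
    have uvC : u + v ∉ C := fun hh => hvC ((Submodule.add_mem_iff_right A uA).1 (cA hh))
    have uwC : u + w ∉ C := fun hh => hwC ((Submodule.add_mem_iff_right A' (cA' uA)).1 (cA' (cA hh)))
    have vwC : v + w ∉ C := fun hh => hwC ((Submodule.add_mem_iff_right A' vA).1 (cA' (cA hh)))
    have uvwC : (u + v) + w ∉ C := fun hh =>
      hwC ((Submodule.add_mem_iff_right A' (A'.add_mem (cA' uA) vA)).1 (cA' (cA hh)))
    have e1 := ho u hu w hw huC wC uwC
    have e2 := ho v hv w hw vC wC vwC
    have e3 := ho _ (O.add_mem hu hv) w hw uvC wC uvwC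
    rw [add_dotProduct, e1, e2] at e3
    exact absurd e3 (by decide)
  obtain ⟨z, hz, hzC, hz4⟩ := key
  refine ⟨C ⊔ Submodule.span (ZMod 2) {z}, ?_, ?_⟩
  · intro x hx
    obtain ⟨c, hc, y, hy, rfl⟩ := Submodule.mem_sup.1 hx
    obtain ⟨a, rfl⟩ := Submodule.mem_span_singleton.1 hy
    have ha := z2_cases a
    rcases ha with rfl | rfl
    · simpa using h c hc
    · rw [one_smul]
      have := wt_add c z
      have h1 := (even_ov c z).2 (hOC z hz c hc)
      have h2 := h c hc
      omega
  · refine lt_of_le_of_ne le_sup_left fun heq => hzC ?_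
    rw [heq]
    exact Submodule.mem_sup_right (Submodule.mem_span_singleton_self _)

lemma exists_big {C : Submodule (ZMod 2) (Fin 13 → ZMod 2)} (h : DE C) :
    ∃ C', DE C' ∧ C ≤ C' ∧
      (Module.finrank (ZMod 2) C' = 5 ∨ Module.finrank (ZMod 2) C' = 6) := by
  obtain ⟨C', hle, hmax⟩ := Finite.exists_le_maximal (p := fun D => DE D) h
  refine ⟨C', hmax.prop, hle, ?_⟩
  have h1 := hmax.prop.finrank_le
  by_contra hcon
  obtain ⟨C'', h2, h3⟩ := hmax.prop.extend (by omega)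
  exact hmax.not_gt h2 h3

lemma systematic {N k n : ℕ} (C : Submodule (ZMod 2) (Fin N → ZMod 2))
    (hk : Module.finrank (ZMod 2) C = k) (hN : k + n = N) :
    ∃ e : Fin k ⊕ Fin n ≃ Fin N, ∃ g : Fin k → Fin N → ZMod 2,
      (∀ j, g j ∈ C) ∧ (∀ i j, g j (e (Sum.inl i)) = if i = j then 1 else 0) ∧
      ∀ c ∈ C, c = ∑ j, c (e (Sum.inl j)) • g j := by
  obtain ⟨κ, a, ha, hspan, hli⟩ := exists_linearIndependent' (ZMod 2)
    (fun i : Fin N => ((LinearMap.proj i : (Fin N → ZMod 2) →ₗ[ZMod 2] ZMod 2).domRestrict C))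
  have : Finite κ := Finite.of_injective a ha
  have := Fintype.ofFinite κ
  let R : C →ₗ[ZMod 2] (κ → ZMod 2) :=
    LinearMap.pi fun t => ((LinearMap.proj (a t) : (Fin N → ZMod 2) →ₗ[ZMod 2] ZMod 2).domRestrict C)
  have hRinj : Function.Injective R := by
    rw [← LinearMap.ker_eq_bot, LinearMap.ker_eq_bot']
    intro c hc
    ext i
    have hmem : ((LinearMap.proj i : (Fin N → ZMod 2) →ₗ[ZMod 2] ZMod 2).domRestrict C) ∈
        LinearMap.ker (LinearMap.applyₗ (R := ZMod 2) (M₂ := ZMod 2) c) := by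
      have h1 : Submodule.span (ZMod 2) (Set.range ((fun i : Fin N =>
          ((LinearMap.proj i : (Fin N → ZMod 2) →ₗ[ZMod 2] ZMod 2).domRestrict C)) ∘ a)) ≤
          LinearMap.ker (LinearMap.applyₗ (R := ZMod 2) (M₂ := ZMod 2) c) := by
        rw [Submodule.span_le]
        rintro _ ⟨t, rfl⟩
        exact congrFun hc t
      rw [hspan] at h1
      exact h1 (Submodule.subset_span ⟨i, rfl⟩)
    exact hmem
  have c1 := hli.fintype_card_le_finrank
  rw [Subspace.dual_finrank_eq] at c1
  have c2 := LinearMap.finrank_le_finrank_of_injective hRinj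
  rw [Module.finrank_fintype_fun_eq_card] at c2
  have hcard : Fintype.card κ = k := by omega
  obtain ⟨ε⟩ : Nonempty (Fin k ≃ κ) := ⟨(Fintype.equivFinOfCardEq hcard).symm⟩
  have hRbij : Function.Bijective R := ⟨hRinj, by
    rw [← LinearMap.injective_iff_surjective_of_finrank_eq_finrank]
    · exact hRinj
    · rw [Module.finrank_fintype_fun_eq_card]; omega⟩
  have hpinj : Function.Injective (a ∘ ε) := ha.comp ε.injective
  have hcompl : Fintype.card {i : Fin N // ¬ i ∈ Set.range (a ∘ ε)} = n := by
    rw [Fintype.card_subtype_compl, Fintype.card_fin]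
    have : Fintype.card {x // x ∈ Set.range (a ∘ ε)} = k := by
      have := (Fintype.card_congr (Equiv.ofInjective _ hpinj)).symm
      rw [Fintype.card_fin] at this
      exact this
    omega
  let e : Fin k ⊕ Fin n ≃ Fin N :=
    (Equiv.sumCongr (Equiv.ofInjective _ hpinj) (Fintype.equivFinOfCardEq hcompl).symm).trans
      (Equiv.sumCompl (fun i => i ∈ Set.range (a ∘ ε)))
  have he : ∀ j, e (Sum.inl j) = a (ε j) := fun j => rfl
  choose g hg using fun j : Fin k => hRbij.2 (Pi.single (ε j) 1)
  have hgv : ∀ i j, (g j : Fin N → ZMod 2) (e (Sum.inl i)) = if i = j then 1 else 0 := by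
    intro i j
    have := congrFun (hg j) (ε i)
    rw [Pi.single_apply] at this
    rw [he]
    simp only [EmbeddingLike.apply_eq_iff_eq] at this
    exact this
  refine ⟨e, fun j => g j, fun j => (g j).2, hgv, ?_⟩
  intro c hc
  have : (⟨c, hc⟩ : C) = ∑ j, c (e (Sum.inl j)) • g j := by
    apply hRinj
    funext t
    obtain ⟨i, rfl⟩ := ε.surjective t
    have hL : R ⟨c, hc⟩ (ε i) = c (e (Sum.inl i)) := rfl
    rw [hL, map_sum, Finset.sum_apply]
    simp only [map_smul, hg, Pi.smul_apply, Pi.single_apply, smul_eq_mul]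
    simp
  have h2 := congrArg (Subtype.val) this
  simpa using h2

end S10

namespace S10
set_option linter.unusedSectionVars false
set_option linter.unnecessarySeqFocus false
/-- number of ones among the low `n` bits -/
def pc : ℕ → ℕ → ℕ
  | 0, _ => 0
  | n + 1, m => pc n m + (m.testBit n).toNat

def orth (n a b : ℕ) : Bool := pc n (a &&& b) % 2 == 0

def cands (n : ℕ) : List ℕ := (List.range (2 ^ n)).filter fun m => pc n m % 4 == 3

def srch (n : ℕ) (leaf : List ℕ → Bool) : ℕ → List ℕ → List ℕ → Bool
  | 0, _, acc => leaf acc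
  | k + 1, cand, acc => cand.all fun r => srch n leaf k (cand.filter fun t => orth n r t && Nat.blt r t) (acc ++ [r])

def colOf : List ℕ → ℕ → ℕ
  | [], _ => 0
  | r :: rs, i => (r.testBit i).toNat + 2 * colOf rs i

def formA (a b c d e : ℕ) : List ℕ :=
  [a, b, c, a ^^^ b, a ^^^ c, b ^^^ c, a ^^^ (b ^^^ c), d, d, e, e, d ^^^ e, d ^^^ e]

def formB (c b1 b2 b3 b4 : ℕ) : List ℕ :=
  [c, c, c, b1, b1 ^^^ c, b2, b2 ^^^ c, b3, b3 ^^^ c, b4, b4 ^^^ c,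
   b1 ^^^ (b2 ^^^ (b3 ^^^ b4)), (b1 ^^^ (b2 ^^^ (b3 ^^^ b4))) ^^^ c]

def isFormA (l : List ℕ) : Bool :=
  match l.filter (fun t => l.count t == 2), l.filter (fun t => l.count t == 1) with
  | d :: ds, a :: b :: ss =>
    let e := (ds.filter (fun t => t != d)).headD 0
    let c := (ss.filter (fun t => t != a ^^^ b)).headD 0
    (formA a b c d e).isPerm l
  | _, _ => false

def isFormB (l : List ℕ) : Bool :=
  match l.filter (fun t => l.count t == 3), l.filter (fun t => l.count t == 1) with
  | c :: _, b1 :: s1 =>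
    match s1.filter (fun t => t != b1 ^^^ c) with
    | b2 :: s2 =>
      match s2.filter (fun t => t != b2 ^^^ c) with
      | b3 :: s3 =>
        let b4 := (s3.filter (fun t => t != b3 ^^^ c)).headD 0
        (formB c b1 b2 b3 b4).isPerm l
      | _ => false
    | _ => false
  | _, _ => false

def cols (rs : List ℕ) : List ℕ :=
  [1, 2, 4, 8, 16, colOf rs 0, colOf rs 1, colOf rs 2, colOf rs 3, colOf rs 4, colOf rs 5,
    colOf rs 6, colOf rs 7]

def leaf5 (rs : List ℕ) : Bool :=
  (cols rs).contains 0 || isFormA (cols rs) || isFormB (cols rs)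

theorem srch6a : srch 7 (fun _ => false) 5 ((cands 7).filter (orth 7 7)) [7] = true := by
  decide +kernel
theorem srch6b : srch 7 (fun _ => false) 5 ((cands 7).filter (orth 7 127)) [127] = true := by
  decide +kernel
theorem srch5a : srch 8 leaf5 4 ((cands 8).filter (orth 8 7)) [7] = true := by
  decide +kernel
theorem srch5b : srch 8 leaf5 4 ((cands 8).filter (orth 8 127)) [127] = true := by
  decide +kernel

lemma pc_eq (n m : ℕ) : pc n m = ∑ i : Fin n, (m.testBit i).toNat := by
  induction n with
  | zero => simp [pc]
  | succ n ih => rw [pc, ih, Fin.sum_univ_castSucc]; simp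

lemma srch_sound (n : ℕ) (leaf : List ℕ → Bool) : ∀ (rs cand acc : List ℕ),
    srch n leaf rs.length cand acc = true → (∀ r ∈ rs, r ∈ cand) →
    rs.Pairwise (fun a b => orth n a b = true ∧ a < b) → leaf (acc ++ rs) = true := by
  intro rs
  induction rs with
  | nil => intro cand acc h _ _; simpa [srch] using h
  | cons r rs ih =>
    intro cand acc h hm hp
    rw [List.length_cons, srch, List.all_eq_true] at h
    have h1 := h r (hm r (by simp))
    rw [List.pairwise_cons] at hp
    have := ih _ _ h1 (by
      intro t ht
      rw [List.mem_filter]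
      refine ⟨hm t (by simp [ht]), ?_⟩
      have := hp.1 t ht
      simp [this.1, this.2, Nat.blt_eq]) hp.2
    simpa using this

section sem
variable {V : Type*} [AddCommGroup V] [Module (ZMod 2) V]

/-- combination of the vectors in the list given by the bits of the mask -/
def vec : List V → ℕ → V
  | [], _ => 0
  | y :: ys, m => (if m.testBit 0 then y else 0) + vec ys (m / 2)

lemma add_self' (y : V) : y + y = 0 := by
  have : (2 : ZMod 2) • y = 0 := by rw [show (2 : ZMod 2) = 0 from rfl, zero_smul]
  rwa [two_smul] at this

lemma vec_zero (ys : List V) : vec ys 0 = 0 := by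
  induction ys with
  | nil => rfl
  | cons y ys ih => simp [vec, ih]

lemma vec_xor (ys : List V) : ∀ a b : ℕ, vec ys (a ^^^ b) = vec ys a + vec ys b := by
  induction ys with
  | nil => intro a b; simp [vec]
  | cons y ys ih =>
    intro a b
    have h2 : (a ^^^ b) / 2 = (a / 2) ^^^ (b / 2) := by
      have := Nat.shiftRight_xor_distrib (a := a) (b := b) (i := 1)
      simpa [Nat.shiftRight_one] using this
    rw [vec, vec, vec, h2, ih, Nat.testBit_xor]
    cases a.testBit 0 <;> cases b.testBit 0 <;> simp
    · abel
    · abel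
    · have := add_self' y
      rw [show y + vec ys (a / 2) + (y + vec ys (b / 2)) =
        (y + y) + (vec ys (a / 2) + vec ys (b / 2)) by abel, this, zero_add]

/-- value of column `i` -/
def combAt (P : List (ℕ × V)) (i : ℕ) : V :=
  (P.map fun p => if p.1.testBit i then p.2 else 0).sum

lemma vec_colOf (P : List (ℕ × V)) (i : ℕ) :
    vec (P.map Prod.snd) (colOf (P.map Prod.fst) i) = combAt P i := by
  induction P with
  | nil => rfl
  | cons p P ih =>
    simp only [List.map_cons, colOf, vec, combAt, List.sum_cons] at *
    have h1 : ((p.1.testBit i).toNat + 2 * colOf (P.map Prod.fst) i).testBit 0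
        = p.1.testBit i := by
      cases p.1.testBit i <;> simp [Nat.testBit_zero]
    have h2 : ((p.1.testBit i).toNat + 2 * colOf (P.map Prod.fst) i) / 2
        = colOf (P.map Prod.fst) i := by
      cases p.1.testBit i <;> simp <;> omega
    rw [h1, h2, ih]

/-- the multiset of 13 vectors belonging to a systematic generator matrix -/
def pts (P : List (ℕ × V)) : Multiset V :=
  (P.map Prod.snd : Multiset V) + ((List.range 8).map (combAt P) : Multiset V)

lemma pts_perm {P P' : List (ℕ × V)} (h : P.Perm P') : pts P = pts P' := by
  have h1 : combAt P = combAt P' := by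
    funext i
    exact (h.map _).sum_eq
  rw [pts, pts, h1, Multiset.coe_eq_coe.2 (h.map Prod.snd)]

lemma pts_eq (P : List (ℕ × V)) (h : P.length = 5) :
    pts P = ((cols (P.map Prod.fst)).map (vec (P.map Prod.snd)) : Multiset V) := by
  have hc : (cols (P.map Prod.fst)).map (vec (P.map Prod.snd)) =
      ([1, 2, 4, 8, 16].map (vec (P.map Prod.snd))) ++ (List.range 8).map (combAt P) := by
    simp only [cols, List.map_cons, vec_colOf]
    rfl
  rw [hc, pts, ← Multiset.coe_add]
  congr 2
  match P, h with
  | [p0, p1, p2, p3, p4], _ => simp [vec, Nat.testBit_zero]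

def FormA (s : Multiset V) : Prop := ∃ a b c d e : V,
  s = ([a, b, c, a + b, a + c, b + c, a + (b + c), d, d, e, e, d + e, d + e] : List V)

def FormB (s : Multiset V) : Prop := ∃ c b1 b2 b3 b4 : V,
  s = ([c, c, c, b1, b1 + c, b2, b2 + c, b3, b3 + c, b4, b4 + c,
    b1 + (b2 + (b3 + b4)), b1 + (b2 + (b3 + b4)) + c] : List V)

lemma formA_map (ys : List V) (a b c d e : ℕ) :
    FormA ((formA a b c d e).map (vec ys) : Multiset V) :=
  ⟨vec ys a, vec ys b, vec ys c, vec ys d, vec ys e, by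
    simp only [formA, List.map_cons, vec_xor, List.map_nil]⟩

lemma formB_map (ys : List V) (c b1 b2 b3 b4 : ℕ) :
    FormB ((formB c b1 b2 b3 b4).map (vec ys) : Multiset V) :=
  ⟨vec ys c, vec ys b1, vec ys b2, vec ys b3, vec ys b4, by
    simp only [formB, List.map_cons, vec_xor, List.map_nil]⟩

lemma isFormA_sound (l : List ℕ) (h : isFormA l = true) (ys : List V) :
    FormA (l.map (vec ys) : Multiset V) := by
  unfold isFormA at h
  split at h
  · rename_i d ds a b ss _ _
    have h2 := (List.isPerm_iff.1 h).map (vec ys)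
    rw [← Multiset.coe_eq_coe.2 h2]
    exact formA_map ys _ _ _ _ _
  · simp at h

lemma isFormB_sound (l : List ℕ) (h : isFormB l = true) (ys : List V) :
    FormB (l.map (vec ys) : Multiset V) := by
  unfold isFormB at h
  split at h
  · split at h
    · split at h
      · have h2 := (List.isPerm_iff.1 h).map (vec ys)
        rw [← Multiset.coe_eq_coe.2 h2]
        exact formB_map ys _ _ _ _ _
      · simp at h
    · simp at h
  · simp at h

lemma orth_symm {n a b : ℕ} (h : orth n a b = true) : orth n b a = true := by
  unfold orth at *
  rwa [Nat.and_comm]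

lemma orth_self {n a : ℕ} (h : pc n a % 4 = 3) : orth n a a = false := by
  unfold orth
  rw [Nat.and_self]
  simp; omega

lemma search_any (n : ℕ) (leaf : List ℕ → Bool) (r0 : ℕ) (rs : List (ℕ × V)) (k : ℕ)
    (hk : rs.length = k)
    (hs : srch n leaf k ((cands n).filter (orth n r0)) [r0] = true)
    (hr : ∀ r ∈ rs, r.1 < 2 ^ n ∧ pc n r.1 % 4 = 3 ∧ orth n r0 r.1 = true)
    (hp : rs.Pairwise (fun a b => orth n a.1 b.1 = true)) :
    ∃ rs' : List (ℕ × V), rs'.Perm rs ∧ leaf (r0 :: rs'.map Prod.fst) = true := by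
  let le : ℕ × V → ℕ × V → Bool := fun a b => decide (a.1 ≤ b.1)
  have hperm := List.mergeSort_perm rs le
  have hsort := List.pairwise_mergeSort (le := le)
    (by intro a b c; simp only [le, decide_eq_true_eq]; omega)
    (by intro a b; simp only [le, Bool.or_eq_true, decide_eq_true_eq]; omega) rs
  refine ⟨_, hperm, ?_⟩
  have hp' := (hperm.pairwise_iff (R := fun a b : ℕ × V => orth n a.1 b.1 = true)
    (fun h => orth_symm h)).2 hp
  refine srch_sound n leaf ((rs.mergeSort le).map Prod.fst) _ [r0] (by simpa [hk] using hs) ?_ ?_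
  · intro r hr'
    obtain ⟨p, hp1, rfl⟩ := List.mem_map.1 hr'
    have := hr p (hperm.mem_iff.1 hp1)
    simp only [cands, List.mem_filter, List.mem_range]
    simp [this]
  · rw [List.pairwise_map]
    refine (hp'.and hsort).imp_of_mem ?_
    intro a b ha hb hab
    refine ⟨hab.1, ?_⟩
    have h1 : a.1 ≤ b.1 := by simpa [le] using hab.2
    refine lt_of_le_of_ne h1 fun heq => ?_
    have h3 := orth_self (hr a (hperm.mem_iff.1 ha)).2.1
    rw [heq] at h3
    have h4 := hab.1
    rw [heq, h3] at h4
    simp at h4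

lemma final5 (r0 : ℕ) (y0 : V) (rs : List (ℕ × V)) (hk : rs.length = 4) (h0 : r0 = 7 ∨ r0 = 127)
    (hr : ∀ r ∈ rs, r.1 < 2 ^ 8 ∧ pc 8 r.1 % 4 = 3 ∧ orth 8 r0 r.1 = true)
    (hp : rs.Pairwise (fun a b => orth 8 a.1 b.1 = true))
    (hz : (0 : V) ∉ pts ((r0, y0) :: rs)) :
    FormA (pts ((r0, y0) :: rs)) ∨ FormB (pts ((r0, y0) :: rs)) := by
  have hs : srch 8 leaf5 4 ((cands 8).filter (orth 8 r0)) [r0] = true := by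
    rcases h0 with rfl | rfl
    · exact srch5a
    · exact srch5b
  obtain ⟨rs', hperm, hleaf⟩ := search_any 8 leaf5 r0 rs 4 hk hs hr hp
  have hperm2 : ((r0, y0) :: rs').Perm ((r0, y0) :: rs) := hperm.cons _
  rw [← pts_perm hperm2] at hz ⊢
  have hl : ((r0, y0) :: rs').length = 5 := by rw [hperm2.length_eq]; simp [hk]
  rw [pts_eq _ hl] at hz ⊢
  unfold leaf5 at hleaf
  simp only [Bool.or_eq_true] at hleaf
  rcases hleaf with (h | h) | h
  · exfalso
    apply hz
    rw [List.contains_iff_mem] at h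
    have := List.mem_map_of_mem (f := vec (List.map Prod.snd ((r0, y0) :: rs'))) h
    rw [vec_zero] at this
    exact this
  · exact Or.inl (isFormA_sound _ h _)
  · exact Or.inr (isFormB_sound _ h _)

lemma final6 (r0 : ℕ) (rs : List (ℕ × V)) (hk : rs.length = 5) (h0 : r0 = 7 ∨ r0 = 127)
    (hr : ∀ r ∈ rs, r.1 < 2 ^ 7 ∧ pc 7 r.1 % 4 = 3 ∧ orth 7 r0 r.1 = true)
    (hp : rs.Pairwise (fun a b => orth 7 a.1 b.1 = true)) : False := by
  have hs : srch 7 (fun _ => false) 5 ((cands 7).filter (orth 7 r0)) [r0] = true := by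
    rcases h0 with rfl | rfl
    · exact srch6a
    · exact srch6b
  obtain ⟨rs', hperm, hleaf⟩ := search_any 7 _ r0 rs 5 hk hs hr hp
  simp at hleaf

end sem
end S10

namespace S10
set_option linter.unusedSectionVars false

lemma exists_sort {n : ℕ} (f : Fin n → ZMod 2) :
    ∃ τ : Equiv.Perm (Fin n), ∀ i, f (τ i) = 1 ↔ (i : ℕ) < wt f := by
  have hw : wt f = Fintype.card {i // f i = 1} := by
    rw [Fintype.card_subtype, Finset.card_filter]
    refine Finset.sum_congr rfl fun i _ => ?_
    rcases z2_cases (f i) with h | h <;> rw [h] <;> decide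
  have hle : wt f ≤ n := by
    rw [hw]; simpa using Fintype.card_subtype_le (fun i => f i = 1)
  have hc : Fintype.card {i : Fin n // (i : ℕ) < wt f} = wt f := by
    have e1 : {i : Fin n // (i : ℕ) < wt f} ≃ Fin (wt f) :=
      { toFun := fun i => ⟨i.1.1, i.2⟩
        invFun := fun i => ⟨⟨i.1, by omega⟩, i.2⟩
        left_inv := fun i => rfl
        right_inv := fun i => rfl }
    rw [Fintype.card_congr e1, Fintype.card_fin]
  let ε : {i : Fin n // (i : ℕ) < wt f} ≃ {i // f i = 1} :=
    Fintype.equivOfCardEq (by rw [hc, hw])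
  refine ⟨ε.extendSubtype, fun i => ⟨fun h => ?_, fun h => ε.extendSubtype_mem i h⟩⟩
  by_contra hn
  exact ε.extendSubtype_not_mem i hn h

/-- mask of a binary word -/
def msk {n : ℕ} (f : Fin n → ZMod 2) : ℕ := Nat.ofBits fun i => decide (f i = 1)

lemma testBit_msk {n : ℕ} (f : Fin n → ZMod 2) (i : Fin n) :
    (msk f).testBit i = decide (f i = 1) := Nat.testBit_ofBits_lt _ _ i.2

lemma pc_msk {n : ℕ} (f : Fin n → ZMod 2) : pc n (msk f) = wt f := by
  rw [pc_eq, wt]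
  refine Finset.sum_congr rfl fun i _ => ?_
  rw [testBit_msk]
  rcases z2_cases (f i) with h | h <;> rw [h] <;> decide

lemma pc_msk_and {n : ℕ} (f g : Fin n → ZMod 2) : pc n (msk f &&& msk g) = ov f g := by
  rw [pc_eq, ov]
  refine Finset.sum_congr rfl fun i _ => ?_
  rw [Nat.testBit_and, testBit_msk, testBit_msk]
  rcases z2_cases (f i) with h | h <;> rcases z2_cases (g i) with h' | h' <;> rw [h, h'] <;> decide

lemma rowdata (K n : ℕ) (hn : K + 1 + n = 13) (hn8 : n = 7 ∨ n = 8)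
    (C : Submodule (ZMod 2) (Fin 13 → ZMod 2))
    (hC : DE C) (hk : Module.finrank (ZMod 2) C = K + 1) :
    ∃ e : Fin (K + 1) ⊕ Fin n ≃ Fin 13, ∃ A : Fin (K + 1) → Fin n → ZMod 2,
      (∀ c ∈ C, ∀ i, c (e (Sum.inr i)) = ∑ j, c (e (Sum.inl j)) * A j i) ∧
      (∀ j, msk (A j) < 2 ^ n ∧ pc n (msk (A j)) % 4 = 3) ∧
      (∀ j j', j ≠ j' → orth n (msk (A j)) (msk (A j')) = true) ∧
      (msk (A 0) = 7 ∨ msk (A 0) = 127) := by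
  obtain ⟨e, g, hgC, hgv, hgen⟩ := systematic C hk hn
  obtain ⟨τ, hτ⟩ := exists_sort (fun i => g 0 (e (Sum.inr i)))
  let e' : Fin (K + 1) ⊕ Fin n ≃ Fin 13 := (Equiv.sumCongr (Equiv.refl _) τ).trans e
  let A : Fin (K + 1) → Fin n → ZMod 2 := fun j i => g j (e' (Sum.inr i))
  have hgv' : ∀ i j, g j (e' (Sum.inl i)) = if i = j then 1 else 0 := fun i j => hgv i j
  have hwt : ∀ j, wt (A j) % 4 = 3 := by
    intro j
    have h1 := hC _ (hgC j)
    have h2 : wt (g j) = 1 + wt (A j) := by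
      unfold wt
      rw [← Equiv.sum_comp e', Fintype.sum_sum_type]
      congr 1
      simp only [hgv']
      rw [Finset.sum_eq_single j]
      · simp; rfl
      · intro b _ hb; simp [hb]
      · simp
    omega
  refine ⟨e', A, ?_, ?_, ?_, ?_⟩
  · intro c hc i
    have := congrFun (hgen c hc) (e' (Sum.inr i))
    rw [Finset.sum_apply] at this
    exact this
  · intro j
    exact ⟨Nat.ofBits_lt_two_pow _, by rw [pc_msk]; exact hwt j⟩
  · intro j j' hjj
    have h1 := hC.dot (hgC j) (hgC j')
    have h2 : A j ⬝ᵥ A j' = 0 := by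
      unfold dotProduct at h1 ⊢
      rw [← Equiv.sum_comp e', Fintype.sum_sum_type] at h1
      rw [Finset.sum_eq_zero, zero_add] at h1
      · exact h1
      · intro i _
        rw [hgv', hgv']
        by_cases h : i = j
        · have : i ≠ j' := fun h' => hjj (h.symm.trans h')
          simp [this]
        · simp [h]
    rw [← even_ov] at h2
    unfold orth
    rw [pc_msk_and]
    simp; omega
  · have h3 := hwt 0
    have hb : ∀ i, decide (A 0 i = 1) = decide ((i : ℕ) < wt (A 0)) := by
      intro i
      have hw : wt (A 0) = wt (fun i => g 0 (e (Sum.inr i))) :=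
        Equiv.sum_comp τ (fun i => (g 0 (e (Sum.inr i))).val)
      rw [hw]
      exact decide_eq_decide.2 (hτ i)
    have hle : wt (A 0) ≤ n := by
      unfold wt
      refine (Finset.sum_le_card_nsmul _ _ 1 fun i _ => ?_).trans (by simp)
      rcases z2_cases (A 0 i) with h | h <;> rw [h] <;> decide
    unfold msk
    simp only [hb]
    have h37 : wt (A 0) = 3 ∨ wt (A 0) = 7 := by omega
    rcases h37 with h | h <;> rw [h] <;> rcases hn8 with rfl | rfl <;> decide

section
variable {V : Type*} [AddCommGroup V] [Module (ZMod 2) V]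

theorem classify (x : Fin 13 → V) (hx : ∀ i, x i ≠ 0)
    (hdiv : ∀ φ : Module.Dual (ZMod 2) V, 4 ∣ wt (fun i => φ (x i))) :
    FormA (Finset.univ.val.map x) ∨ FormB (Finset.univ.val.map x) := by
  let T : Module.Dual (ZMod 2) V →ₗ[ZMod 2] (Fin 13 → ZMod 2) :=
    LinearMap.pi fun i => LinearMap.applyₗ (x i)
  have hT : DE (LinearMap.range T) := by
    rintro _ ⟨φ, rfl⟩
    exact hdiv φ
  obtain ⟨C, hC, hle, hk⟩ := exists_big hT
  rcases hk with hk | hk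
  · obtain ⟨e, A, h1, h2, h3, h4⟩ := rowdata 4 8 (by norm_num) (Or.inr rfl) C hC hk
    have hxe : ∀ i, x (e (Sum.inr i)) = ∑ j, A j i • x (e (Sum.inl j)) := by
      intro i
      rw [← sub_eq_zero, ← Module.forall_dual_apply_eq_zero_iff (ZMod 2)]
      intro φ
      have := h1 (T φ) (hle ⟨φ, rfl⟩) i
      have hTa : ∀ i, T φ i = φ (x i) := fun i => rfl
      simp only [hTa] at this
      rw [map_sub, this, map_sum, sub_eq_zero]
      refine Finset.sum_congr rfl fun j _ => ?_
      rw [map_smul, smul_eq_mul, mul_comm]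
    let f : Fin 5 → ℕ × V := fun j => (msk (A j), x (e (Sum.inl j)))
    have hf : List.ofFn f = (msk (A 0), x (e (Sum.inl 0))) :: List.ofFn (fun j : Fin 4 => f j.succ) := by
      rw [List.ofFn_succ]
    have hpts : pts (List.ofFn f) = Finset.univ.val.map x := by
      have e1 : (Finset.univ.val.map x) =
          (Finset.univ : Finset (Fin 5 ⊕ Fin 8)).val.map (fun t => x (e t)) := by
        have : (Finset.univ : Finset (Fin 13)) = Finset.univ.map e.toEmbedding := by simp
        rw [this, Finset.map_val, Multiset.map_map]
        rfl
      have e2 : ∀ i : Fin 8, combAt (List.ofFn f) i = x (e (Sum.inr i)) := by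
        intro i
        rw [hxe, combAt, List.map_ofFn, List.sum_ofFn]
        refine Finset.sum_congr rfl fun j _ => ?_
        simp only [Function.comp, f, testBit_msk]
        rcases z2_cases (A j i) with h | h <;> simp [h]
      rw [e1, pts]
      have e3 : (Finset.univ : Finset (Fin 5 ⊕ Fin 8)).val.map (fun t => x (e t)) =
        (Finset.univ : Finset (Fin 5)).val.map (fun j => x (e (Sum.inl j))) +
        (Finset.univ : Finset (Fin 8)).val.map (fun j => x (e (Sum.inr j))) := by
        rw [← Finset.univ_disjSum_univ]
        simp [Finset.disjSum, Multiset.disjSum]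
      rw [e3]
      congr 1
      rw [Fin.univ_val_map]
      congr 1
      simp only [← e2]
      rfl
    rw [← hpts, hf]
    refine final5 _ _ _ (by simp) h4 ?_ ?_ ?_
    · intro r hr
      rw [List.mem_ofFn] at hr
      obtain ⟨j, rfl⟩ := hr
      exact ⟨(h2 _).1, (h2 _).2, h3 _ _ (Fin.succ_ne_zero j).symm⟩
    · rw [List.pairwise_ofFn]
      intro i j hij
      exact h3 _ _ (fun h => hij.ne (Fin.succ_injective _ h))
    · rw [← hf, hpts]
      intro h
      obtain ⟨i, _, hi⟩ := Multiset.mem_map.1 h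
      exact hx i hi
  · exfalso
    obtain ⟨e, A, h1, h2, h3, h4⟩ := rowdata 5 7 (by norm_num) (Or.inl rfl) C hC hk
    refine final6 (V := V) _ (List.ofFn (fun j : Fin 5 => (msk (A j.succ), (0 : V)))) (by simp) h4 ?_ ?_
    · intro r hr
      rw [List.mem_ofFn] at hr
      obtain ⟨j, rfl⟩ := hr
      exact ⟨(h2 _).1, (h2 _).2, h3 _ _ (Fin.succ_ne_zero j).symm⟩
    · rw [List.pairwise_ofFn]
      intro i j hij
      exact h3 _ _ (fun h => hij.ne (Fin.succ_injective _ h))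
end
end S10

namespace S10
set_option linter.unusedSectionVars false
section
variable {V : Type*} [AddCommGroup V] [Module (ZMod 2) V]

lemma vec_ofFn {n : ℕ} : ∀ (y : Fin n → V) (m : ℕ),
    vec (List.ofFn y) m = ∑ i : Fin n, if m.testBit i then y i else 0 := by
  induction n with
  | zero => intro y m; simp [vec]
  | succ n ih =>
    intro y m
    rw [List.ofFn_succ, vec, ih, Fin.sum_univ_succ]
    simp [Nat.testBit_succ]

lemma vec_msk {n : ℕ} (y : Fin n → V) (g : Fin n → ZMod 2) :
    vec (List.ofFn y) (msk g) = ∑ i, g i • y i := by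
  rw [vec_ofFn]
  refine Finset.sum_congr rfl fun i _ => ?_
  rw [testBit_msk]
  rcases z2_cases (g i) with h | h <;> simp [h]

lemma li_of {n : ℕ} (y : Fin n → V)
    (h : ∀ m, 0 < m → m < 2 ^ n → vec (List.ofFn y) m ≠ 0) : LinearIndependent (ZMod 2) y := by
  rw [Fintype.linearIndependent_iff]
  intro g hg i
  rw [← vec_msk] at hg
  have h0 : msk g = 0 := by
    by_contra hne
    exact h _ (Nat.pos_of_ne_zero hne) (Nat.ofBits_lt_two_pow _) hg
  have := testBit_msk g i
  rw [h0] at this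
  rcases z2_cases (g i) with h | h
  · exact h
  · simp [h] at this

lemma mem_span_vec {n : ℕ} (y : Fin n → V) (w : V) :
    w ∈ Submodule.span (ZMod 2) (Set.range y) ↔ ∃ m < 2 ^ n, vec (List.ofFn y) m = w := by
  rw [Submodule.mem_span_range_iff_exists_fun]
  constructor
  · rintro ⟨g, rfl⟩
    exact ⟨msk g, Nat.ofBits_lt_two_pow _, vec_msk y g⟩
  · rintro ⟨m, _, rfl⟩
    refine ⟨fun i => if m.testBit i then 1 else 0, ?_⟩
    rw [vec_ofFn]
    refine Finset.sum_congr rfl fun i _ => ?_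
    by_cases h : m.testBit i = true <;> simp [h]

lemma vec_inj {n : ℕ} (ys : List V) (h : ∀ m, 0 < m → m < 2 ^ n → vec ys m ≠ 0) {a b : ℕ}
    (ha : a < 2 ^ n) (hb : b < 2 ^ n) (hab : vec ys a = vec ys b) : a = b := by
  by_contra hne
  have h1 : vec ys (a ^^^ b) = 0 := by rw [vec_xor, hab, add_self']
  refine h _ ?_ (Nat.xor_lt_two_pow ha hb) h1
  rw [Nat.pos_iff_ne_zero]
  intro h0
  exact hne (Nat.xor_eq_zero_iff.1 h0)

lemma nodup_vec {n : ℕ} (ys : List V) (h : ∀ m, 0 < m → m < 2 ^ n → vec ys m ≠ 0)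
    (l : List ℕ) (hl : l.Nodup) (hlt : ∀ m ∈ l, m < 2 ^ n) : (l.map (vec ys)).Nodup :=
  List.Nodup.map_on (fun _ ha _ hb hab => vec_inj ys h (hlt _ ha) (hlt _ hb) hab) hl

lemma l7_eq (a b c : V) : [a, b, c, a + b, a + c, b + c, a + (b + c)] =
    [1, 2, 4, 3, 5, 6, 7].map (vec [a, b, c]) := by
  simp [vec, Nat.testBit_zero]

lemma l3_eq (d e : V) : [d, e, d + e] = [1, 2, 3].map (vec [d, e]) := by
  simp [vec, Nat.testBit_zero]

/-- A full set of nonzero combinations is the set of points of a subspace. -/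
lemma span_count {n : ℕ} (y : Fin n → V) (l : List ℕ) (hl : l.Nodup)
    (hmem : ∀ m, m ∈ l ↔ 0 < m ∧ m < 2 ^ n) (h0 : (0 : V) ∉ l.map (vec (List.ofFn y))) :
    Module.finrank (ZMod 2) (Submodule.span (ZMod 2) (Set.range y)) = n ∧
    ∀ w : V, w ≠ 0 → (l.map (vec (List.ofFn y))).count w =
      if w ∈ Submodule.span (ZMod 2) (Set.range y) then 1 else 0 := by
  have hz : ∀ m, 0 < m → m < 2 ^ n → vec (List.ofFn y) m ≠ 0 := by
    intro m h1 h2 h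
    exact h0 (List.mem_map.2 ⟨m, (hmem m).2 ⟨h1, h2⟩, h⟩)
  refine ⟨by simpa using finrank_span_eq_card (li_of y hz), fun w hw => ?_⟩
  rw [(nodup_vec (n := n) _ hz l hl (fun m hm => ((hmem m).1 hm).2)).count]
  congr 1
  rw [mem_span_vec, eq_iff_iff, List.mem_map]
  constructor
  · rintro ⟨m, h1, h2⟩
    exact ⟨m, ((hmem m).1 h1).2, h2⟩
  · rintro ⟨m, h1, h2⟩
    refine ⟨m, (hmem m).2 ⟨?_, h1⟩, h2⟩
    rw [Nat.pos_iff_ne_zero]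
    rintro rfl
    exact hw (by rw [← h2, vec_zero])

lemma formA_concl (s : Multiset V) (h0 : (0 : V) ∉ s) (h : FormA s) :
    ∃ E L : Submodule (ZMod 2) V, Module.finrank (ZMod 2) E = 3 ∧ Module.finrank (ZMod 2) L = 2 ∧
      ∀ w : V, w ≠ 0 → s.count w = (if w ∈ E then 1 else 0) + (if w ∈ L then 2 else 0) := by
  obtain ⟨a, b, c, d, e, rfl⟩ := h
  have hs7 : [a, b, c, a + b, a + c, b + c, a + (b + c)] =
    [1, 2, 4, 3, 5, 6, 7].map (vec (List.ofFn ![a, b, c])) := l7_eq a b c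
  have hs3 : [d, e, d + e] = [1, 2, 3].map (vec (List.ofFn ![d, e])) := l3_eq d e
  have hA := span_count ![a, b, c] [1, 2, 4, 3, 5, 6, 7] (by decide)
    (by intro m; simp; omega) (by
      rw [← hs7]
      intro h; apply h0
      simp only [Multiset.mem_coe, List.mem_cons, List.not_mem_nil, or_false] at h ⊢
      tauto)
  have hL := span_count ![d, e] [1, 2, 3] (by decide)
    (by intro m; simp; omega) (by
      rw [← hs3]
      intro h; apply h0
      simp only [Multiset.mem_coe, List.mem_cons, List.not_mem_nil, or_false] at h ⊢
      tauto)
  rw [← hs7] at hA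
  rw [← hs3] at hL
  refine ⟨_, _, hA.1, hL.1, fun w hw => ?_⟩
  have h1 := hA.2 w hw
  have h2 := hL.2 w hw
  have h3 : (if w ∈ Submodule.span (ZMod 2) (Set.range ![d, e]) then 2 else 0) =
    2 * (if w ∈ Submodule.span (ZMod 2) (Set.range ![d, e]) then 1 else 0) := by
    split <;> rfl
  rw [h3, ← h1, ← h2, Multiset.coe_count]
  simp only [List.count_cons, List.count_nil]
  ring

/-- symmetric version of the second form -/
def coneB (c : V) (b : Fin 5 → V) : Multiset V :=
  ([c, c, c] : List V) + (Finset.univ.val.map b + Finset.univ.val.map (fun i => b i + c))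

lemma coneB_perm (c : V) (b : Fin 5 → V) (σ : Equiv.Perm (Fin 5)) :
    coneB c (b ∘ σ) = coneB c b := by
  have h : ∀ f : Fin 5 → V, Finset.univ.val.map (f ∘ σ) = Finset.univ.val.map f := by
    intro f
    have h2 : (Finset.univ : Finset (Fin 5)) = Finset.univ.map σ.toEmbedding := by simp
    conv_rhs => rw [h2, Finset.map_val, Multiset.map_map]
    rfl
  unfold coneB
  rw [h b]
  congr 2
  exact h (fun i => b i + c)

lemma coneB_list (c : V) (b : Fin 5 → V) : coneB c b =
    ([c, c, c, b 0, b 1, b 2, b 3, b 4, b 0 + c, b 1 + c, b 2 + c, b 3 + c, b 4 + c] : List V) := by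
  unfold coneB
  rw [Fin.univ_val_map, Fin.univ_val_map, Multiset.coe_add, Multiset.coe_add]
  simp [List.ofFn_succ]

lemma formB_cone (s : Multiset V) (h : FormB s) :
    ∃ (c : V) (b : Fin 5 → V), b 4 = b 0 + (b 1 + (b 2 + b 3)) ∧ s = coneB c b := by
  obtain ⟨c, b1, b2, b3, b4, rfl⟩ := h
  refine ⟨c, ![b1, b2, b3, b4, b1 + (b2 + (b3 + b4))], rfl, ?_⟩
  rw [coneB_list, Multiset.coe_eq_coe]
  rw [List.perm_iff_count]
  intro w
  simp only [List.count_cons, List.count_nil]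
  simp
  ring

lemma sum_zero_iff (b : Fin 5 → V) : b 4 = b 0 + (b 1 + (b 2 + b 3)) ↔ ∑ i, b i = 0 := by
  rw [Fin.sum_univ_five]
  have h := add_self' (b 4)
  constructor
  · intro h1
    rw [show b 0 + b 1 + b 2 + b 3 + b 4 = b 0 + (b 1 + (b 2 + b 3)) + b 4 by abel, ← h1, h]
  · intro h1
    rw [← add_left_inj (b 4), h, ← h1]
    abel

lemma degen01 (c : V) (b : Fin 5 → V) (hb : b 4 = b 0 + (b 1 + (b 2 + b 3)))
    (h : b 1 = b 0 ∨ b 1 = b 0 + c) : FormA (coneB c b) := by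
  refine ⟨b 2, b 3, c, b 0, c, ?_⟩
  rw [coneB_list, Multiset.coe_eq_coe, List.perm_iff_count]
  intro w
  have hc := add_self' c
  have h0 := add_self' (b 0)
  rcases h with h | h
  · have h4 : b 4 = b 2 + b 3 := by
      rw [hb, h, ← add_assoc, h0, zero_add]
    rw [h4, h, add_assoc (b 2) (b 3) c]
    simp only [List.count_cons, List.count_nil]
    ring
  · have h4 : b 4 = b 2 + (b 3 + c) := by
      rw [hb, h, show b 0 + (b 0 + c + (b 2 + b 3)) = (b 0 + b 0) + (b 2 + (b 3 + c)) by abel,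
        h0, zero_add]
    have h5 : b 1 + c = b 0 := by rw [h, add_assoc, hc, add_zero]
    have h6 : b 4 + c = b 2 + b 3 := by
      rw [h4, show b 2 + (b 3 + c) + c = b 2 + b 3 + (c + c) by abel, hc, add_zero]
    rw [h5, h6, h4, h]
    simp only [List.count_cons, List.count_nil]
    ring

lemma swap_aux : ∀ i j : Fin 5, i ≠ j →
    (Equiv.swap 0 i * Equiv.swap 1 (Equiv.swap 0 i j)) 0 = i ∧
    (Equiv.swap 0 i * Equiv.swap 1 (Equiv.swap 0 i j)) 1 = j := by decide

lemma degen (c : V) (b : Fin 5 → V) (hb : b 4 = b 0 + (b 1 + (b 2 + b 3))) (i j : Fin 5)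
    (hij : i ≠ j) (h : b i + b j = 0 ∨ b i + b j = c) : FormA (coneB c b) := by
  set σ := Equiv.swap 0 i * Equiv.swap 1 (Equiv.swap 0 i j) with hσ
  obtain ⟨s0, s1⟩ := swap_aux i j hij
  rw [← hσ] at s0 s1
  rw [← coneB_perm c b σ]
  apply degen01
  · rw [sum_zero_iff] at hb ⊢
    rw [← hb]
    exact Equiv.sum_comp σ b
  · simp only [Function.comp, s0, s1]
    have h0 := add_self' (b i)
    rcases h with h | h
    · left
      rw [← add_right_inj (b i), h, h0]
    · right
      rw [← h, ← add_assoc, h0, zero_add]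

/-- masks of the five base vectors in terms of the first four -/
def bm : Fin 5 → ℕ := ![1, 2, 4, 8, 15]

lemma bm_cover : ∀ m < 32, 0 < m → m = 16 ∨ (∃ i, m = bm i) ∨ (∃ i, m = bm i ^^^ 16) ∨
    (∃ i j, i ≠ j ∧ m = bm i ^^^ bm j) ∨ (∃ i j, i ≠ j ∧ m = (bm i ^^^ bm j) ^^^ 16) := by
  decide +kernel

lemma add_eq_zero_char2 {a b : V} (h : a + b = 0) : a = b := by
  rw [← add_left_inj b, h, add_self']

lemma cone_nondeg (c : V) (b : Fin 5 → V) (hb : b 4 = b 0 + (b 1 + (b 2 + b 3)))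
    (h0 : (0 : V) ∉ coneB c b) (hnd : ∀ i j, i ≠ j → b i + b j ≠ 0 ∧ b i + b j ≠ c) :
    (∀ i, vec (List.ofFn ![b 0, b 1, b 2, b 3, c]) (bm i) = b i) ∧
    vec (List.ofFn ![b 0, b 1, b 2, b 3, c]) 16 = c ∧
    ∀ m, 0 < m → m < 2 ^ 5 → vec (List.ofFn ![b 0, b 1, b 2, b 3, c]) m ≠ 0 := by
  have e1 : ∀ i, vec (List.ofFn ![b 0, b 1, b 2, b 3, c]) (bm i) = b i := by
    have hl : List.ofFn ![b 0, b 1, b 2, b 3, c] = [b 0, b 1, b 2, b 3, c] := rfl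
    rw [hl]
    intro i
    fin_cases i <;> simp [bm, vec, Nat.testBit_zero, hb]
  have e2 : vec (List.ofFn ![b 0, b 1, b 2, b 3, c]) 16 = c := by
    have hl : List.ofFn ![b 0, b 1, b 2, b 3, c] = [b 0, b 1, b 2, b 3, c] := rfl
    rw [hl]
    simp [vec, Nat.testBit_zero]
  refine ⟨e1, e2, ?_⟩
  intro m hm1 hm2 hv
  rcases bm_cover m hm2 hm1 with rfl | ⟨i, rfl⟩ | ⟨i, rfl⟩ | ⟨i, j, hij, rfl⟩ | ⟨i, j, hij, rfl⟩
  · rw [e2] at hv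
    apply h0; rw [coneB_list, hv]; simp
  · rw [e1] at hv
    apply h0; rw [coneB, ← hv]
    refine Multiset.mem_add.2 (Or.inr (Multiset.mem_add.2 (Or.inl ?_)))
    exact Multiset.mem_map_of_mem _ (Finset.mem_univ_val i)
  · rw [vec_xor, e1, e2] at hv
    apply h0; rw [coneB, ← hv]
    refine Multiset.mem_add.2 (Or.inr (Multiset.mem_add.2 (Or.inr ?_)))
    exact Multiset.mem_map_of_mem (fun i => b i + c) (Finset.mem_univ_val i)
  · rw [vec_xor, e1, e1] at hv
    exact (hnd i j hij).1 hv
  · rw [vec_xor, vec_xor, e1, e1, e2] at hv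
    exact (hnd i j hij).2 (add_eq_zero_char2 hv)

end
end S10

namespace S10
section
variable {V : Type*} [AddCommGroup V] [Module (ZMod 2) V]

lemma bm_inj : Function.Injective bm := by decide

lemma cone_concl (c : V) (b : Fin 5 → V) (hb : b 4 = b 0 + (b 1 + (b 2 + b 3)))
    (h0 : (0 : V) ∉ coneB c b) (hnd : ∀ i j, i ≠ j → b i + b j ≠ 0 ∧ b i + b j ≠ c) :
    Function.Injective b ∧
    (∀ S : Finset (Fin 5), S.card = 4 → LinearIndepOn (ZMod 2) b (S : Set (Fin 5))) ∧
    c ∉ Submodule.span (ZMod 2) (Set.range b) ∧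
    (coneB c b).count c = 3 ∧
    ∀ w, w ≠ 0 → w ≠ c → (coneB c b).count w =
      if ∃ i, w ∈ Submodule.span (ZMod 2) {b i, c} then 1 else 0 := by
  obtain ⟨e1, e2, e3⟩ := cone_nondeg c b hb h0 hnd
  have hli := li_of _ e3
  rw [Fintype.linearIndependent_iff] at hli
  set ys := List.ofFn ![b 0, b 1, b 2, b 3, c] with hys
  have hblt : ∀ i, bm i < 2 ^ 5 := by decide
  have hrel : ∀ (g : Fin 5 → ZMod 2) (t : ZMod 2), ∑ i, g i • b i + t • c = 0 →
      (∀ i, g i = g 4) ∧ t = 0 := by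
    intro g t h
    have := hli ![g 0 + g 4, g 1 + g 4, g 2 + g 4, g 3 + g 4, t] (by
      rw [← h, Fin.sum_univ_five, Fin.sum_univ_five, hb]
      simp only [Matrix.cons_val]
      simp only [add_smul, smul_add]
      abel)
    have c2 : ∀ a b : ZMod 2, a + b = 0 → a = b := by decide
    refine ⟨?_, by simpa using this 4⟩
    intro i
    have t0 := this 0
    have t1 := this 1
    have t2 := this 2
    have t3 := this 3
    simp only [Matrix.cons_val] at t0 t1 t2 t3
    fin_cases i
    · exact c2 _ _ t0
    · exact c2 _ _ t1
    · exact c2 _ _ t2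
    · exact c2 _ _ t3
    · rfl
  refine ⟨?_, ?_, ?_, ?_, ?_⟩
  · intro i j hij
    rw [← e1 i, ← e1 j] at hij
    exact bm_inj (vec_inj (n := 5) ys e3 (hblt i) (hblt j) hij)
  · intro S hS
    rw [linearIndepOn_finset_iff]
    intro f hf
    obtain ⟨k, hk⟩ : ∃ k, k ∉ S := by
      by_contra hcon
      push Not at hcon
      have : S = Finset.univ := Finset.eq_univ_iff_forall.2 hcon
      rw [this] at hS
      simp at hS
    have := hrel (fun i => if i ∈ S then f i else 0) 0 (by
      rw [zero_smul, add_zero, ← hf]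
      simp [ite_smul, Finset.sum_ite_mem])
    intro i hi
    have h1 := this.1 i
    have h2 := this.1 k
    simp only [hi, hk, if_true, if_false] at h1 h2
    rw [h1, ← h2]
  · intro hc
    rw [Submodule.mem_span_range_iff_exists_fun] at hc
    obtain ⟨g, hg⟩ := hc
    have := hrel g 1 (by rw [hg, one_smul, add_self'])
    exact absurd this.2 (by decide)
  · have hbc : ∀ i, b i ≠ c := by
      intro i h
      rw [← e1 i, ← e2] at h
      have := vec_inj (n := 5) ys e3 (hblt i) (by norm_num) h
      have hb16 : ∀ i, bm i ≠ 16 := by decide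
      exact hb16 i this
    have hbc2 : ∀ i, b i + c ≠ c := by
      intro i h
      rw [add_eq_right, ← e1 i] at h
      have hbpos : ∀ i, 0 < bm i := by decide
      exact e3 _ (hbpos i) (hblt i) h
    rw [coneB_list, Multiset.coe_count]
    simp [List.count_cons, hbc, hbc2]
  · intro w hw0 hwc
    have hl10 : [b 0, b 1, b 2, b 3, b 4, b 0 + c, b 1 + c, b 2 + c, b 3 + c, b 4 + c] =
        [1, 2, 4, 8, 15, 17, 18, 20, 24, 31].map (vec ys) := by
      have e1' : ∀ i, vec ys (bm i ^^^ 16) = b i + c := by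
        intro i; rw [vec_xor, e1, e2]
      have : [b 0, b 1, b 2, b 3, b 4, b 0 + c, b 1 + c, b 2 + c, b 3 + c, b 4 + c] =
          [vec ys (bm 0), vec ys (bm 1), vec ys (bm 2), vec ys (bm 3), vec ys (bm 4),
            vec ys (bm 0 ^^^ 16), vec ys (bm 1 ^^^ 16), vec ys (bm 2 ^^^ 16),
            vec ys (bm 3 ^^^ 16), vec ys (bm 4 ^^^ 16)] := by
        simp only [e1, e1']
      rw [this]
      rfl
    have hnod := nodup_vec (n := 5) ys e3 [1, 2, 4, 8, 15, 17, 18, 20, 24, 31] (by decide) (by decide)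
    rw [← hl10] at hnod
    have hcount : (coneB c b).count w =
        [b 0, b 1, b 2, b 3, b 4, b 0 + c, b 1 + c, b 2 + c, b 3 + c, b 4 + c].count w := by
      rw [coneB_list, Multiset.coe_count]
      simp only [List.count_cons, List.count_nil]
      simp [Ne.symm hwc]
    rw [hcount, hnod.count]
    congr 1
    rw [eq_iff_iff]
    have hm : w ∈ [b 0, b 1, b 2, b 3, b 4, b 0 + c, b 1 + c, b 2 + c, b 3 + c, b 4 + c] ↔
        ∃ i, w = b i ∨ w = b i + c := by
      simp only [List.mem_cons, List.not_mem_nil, or_false]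
      constructor
      · rintro (h | h | h | h | h | h | h | h | h | h)
        exacts [⟨0, Or.inl h⟩, ⟨1, Or.inl h⟩, ⟨2, Or.inl h⟩, ⟨3, Or.inl h⟩, ⟨4, Or.inl h⟩,
          ⟨0, Or.inr h⟩, ⟨1, Or.inr h⟩, ⟨2, Or.inr h⟩, ⟨3, Or.inr h⟩, ⟨4, Or.inr h⟩]
      · rintro ⟨i, h⟩
        fin_cases i <;> rcases h with h | h <;> simp [h]
    rw [hm]
    refine exists_congr fun i => ?_
    rw [Submodule.mem_span_pair]
    constructor
    · rintro (h | h)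
      · exact ⟨1, 0, by simp [h]⟩
      · exact ⟨1, 1, by simp [h]⟩
    · rintro ⟨p, q, rfl⟩
      rcases z2_cases p with rfl | rfl <;> rcases z2_cases q with rfl | rfl
      · simp at hw0
      · simp at hwc
      · simp
      · simp

end

section points
variable {v : ℕ}

local notation "𝕍" => Fin v → ZMod 2

lemma rep_mk (w : 𝕍) (hw : w ≠ 0) : (Projectivization.mk (ZMod 2) w hw).rep = w := by
  obtain ⟨a, ha⟩ := Projectivization.exists_smul_eq_mk_rep (ZMod 2) w hw
  rw [← ha]
  have : a = 1 := Subsingleton.elim _ _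
  rw [this, one_smul]

lemma rep_inj {P Q : Projectivization (ZMod 2) 𝕍} (h : P.rep = Q.rep) : P = Q := by
  rw [← P.mk_rep, ← Q.mk_rep]
  simp only [h]

lemma sub_le (P : Projectivization (ZMod 2) 𝕍) (K : Submodule (ZMod 2) 𝕍) :
    P.submodule ≤ K ↔ P.rep ∈ K := by
  rw [P.submodule_eq, Submodule.span_singleton_le_iff_mem]

lemma sub_mk (w : 𝕍) (hw : w ≠ 0) :
    (Projectivization.mk (ZMod 2) w hw).submodule = Submodule.span (ZMod 2) {w} := by
  rw [Projectivization.submodule_mk]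

theorem exists_vectors (M : Projectivization (ZMod 2) 𝕍 → ℕ)
    (hdiv : IsDivisible 4 M) (hcard : MVal M ⊤ = 13) :
    ∃ x : Fin 13 → 𝕍, (∀ i, x i ≠ 0) ∧
      (∀ φ : Module.Dual (ZMod 2) 𝕍, 4 ∣ wt (fun i => φ (x i))) ∧
      ∀ Q, M Q = @Multiset.count _ (fun a b => Classical.propDecidable (a = b)) Q.rep
        (Finset.univ.val.map x) := by
  have : Finite (Projectivization (ZMod 2) 𝕍) :=
    Finite.of_injective (fun P => P.rep) (fun _ _ h => rep_inj h)
  have := Fintype.ofFinite (Projectivization (ZMod 2) 𝕍)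
  let s : Multiset 𝕍 := ∑ P, M P • {P.rep}
  have hMV : ∀ K : Submodule (ZMod 2) 𝕍, MVal M K = s.countP (fun w => w ∈ K) := by
    intro K
    have h1 : s.countP (fun w => w ∈ K) = Multiset.countPAddMonoidHom (fun w => w ∈ K) s := rfl
    rw [h1, map_sum]
    unfold MVal
    rw [finsum_mem_def, finsum_eq_sum_of_fintype]
    refine Finset.sum_congr rfl fun P _ => ?_
    rw [map_nsmul, Multiset.coe_countPAddMonoidHom, Set.indicator_apply]
    have hiff : P ∈ {P : Projectivization (ZMod 2) 𝕍 | P.submodule ≤ K} ↔ P.rep ∈ K := sub_le P K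
    simp only [hiff]
    by_cases h : P.rep ∈ K
    · simp [h, Multiset.countP_eq_card_filter, Multiset.filter_singleton]
    · simp [h, Multiset.countP_eq_card_filter, Multiset.filter_singleton]
  have hs13 : s.card = 13 := by
    rw [← hcard, hMV, eq_comm, Multiset.countP_eq_card]
    simp
  have hcount : ∀ Q, M Q = s.count Q.rep := by
    intro Q
    have h1 : s.count Q.rep = Multiset.countAddMonoidHom Q.rep s := rfl
    rw [h1, map_sum, Finset.sum_eq_single Q]
    · simp
    · intro P _ hP
      have : Q.rep ≠ P.rep := fun h => hP (rep_inj h.symm)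
      simp [Multiset.count_singleton, this]
    · simp
  have hlen : s.toList.length = 13 := by rw [Multiset.length_toList, hs13]
  let x : Fin 13 → 𝕍 := fun i => s.toList.get (Fin.cast hlen.symm i)
  have hx : Finset.univ.val.map x = s := by
    rw [Fin.univ_val_map]
    conv_rhs => rw [← Multiset.coe_toList s]
    congr 1
    apply List.ext_get
    · simp [hlen]
    · intro n h1 h2
      rw [List.get_ofFn]
      rfl
  have hcP : ∀ K : Submodule (ZMod 2) 𝕍, MVal M K = ∑ i, if x i ∈ K then 1 else 0 := by
    intro K
    rw [hMV, ← hx, Multiset.countP_map]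
    rw [← Finset.card_filter]
    rfl
  refine ⟨x, ?_, ?_, ?_⟩
  · intro i hi
    have hm : x i ∈ s := by rw [← hx]; exact Multiset.mem_map_of_mem _ (Finset.mem_univ_val i)
    rw [hi] at hm
    simp only [s, Multiset.mem_sum] at hm
    obtain ⟨P, _, hP⟩ := hm
    have := Multiset.mem_of_mem_nsmul hP
    rw [Multiset.mem_singleton] at this
    exact P.rep_nonzero this.symm
  · intro φ
    by_cases hφ : φ = 0
    · simp [hφ, wt]
    have h1 := hdiv (LinearMap.ker φ) (Module.Dual.finrank_ker_add_one_of_ne_zero hφ)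
    rw [hcard, hcP] at h1
    have h2 : (∑ i, if x i ∈ LinearMap.ker φ then 1 else 0) + wt (fun i => φ (x i)) = 13 := by
      unfold wt
      rw [← Finset.sum_add_distrib]
      rw [Finset.sum_congr rfl (g := fun _ => 1)]
      · simp
      · intro i _
        rw [LinearMap.mem_ker]
        rcases z2_cases (φ (x i)) with h | h <;> simp only [h] <;> decide
    unfold Nat.ModEq at h1
    omega
  · rw [hx]
    intro Q
    rw [hcount Q]
    congr!

end points
end S10

theorem stmt_10 (v : ℕ) (M : Projectivization (ZMod 2) (Fin v → ZMod 2) → ℕ)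
    (hdiv : IsDivisible 4 M) (hcard : MVal M ⊤ = 13) :
    (∃ E L : Submodule (ZMod 2) (Fin v → ZMod 2),
      Module.finrank (ZMod 2) E = 3 ∧ Module.finrank (ZMod 2) L = 2 ∧
      ∀ Q, M Q = (if Q.submodule ≤ E then 1 else 0) + (if Q.submodule ≤ L then 2 else 0)) ∨
    (∃ (B : Finset (Projectivization (ZMod 2) (Fin v → ZMod 2)))
        (C : Projectivization (ZMod 2) (Fin v → ZMod 2)),
      IsProjBase 5 B ∧
      ¬ C.submodule ≤ (⨆ P ∈ B, Projectivization.submodule P) ∧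
      M C = 3 ∧
      ∀ Q, Q ≠ C →
        M Q = if ∃ P ∈ B, Q.submodule ≤ Projectivization.submodule P ⊔ C.submodule
          then 1 else 0) := by
  obtain ⟨x, hx0, hxd, hxc⟩ := S10.exists_vectors M hdiv hcard
  set s : Multiset (Fin v → ZMod 2) := Finset.univ.val.map x with hs
  have h0 : (0 : Fin v → ZMod 2) ∉ s := by
    intro h
    obtain ⟨i, _, hi⟩ := Multiset.mem_map.1 h
    exact hx0 i hi
  have hA : S10.FormA s → _ := S10.formA_concl s h0
  by_cases hF : S10.FormA s
  · left
    obtain ⟨E, L, h1, h2, h3⟩ := hA hF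
    refine ⟨E, L, h1, h2, fun Q => ?_⟩
    rw [hxc, h3 _ Q.rep_nonzero, S10.sub_le, S10.sub_le]
  · right
    have hB := (S10.classify x hx0 hxd).resolve_left hF
    obtain ⟨c, b, hb, hcone⟩ := S10.formB_cone _ hB
    rw [← hs] at hcone
    rw [hcone] at h0 hF hxc
    have hnd : ∀ i j, i ≠ j → b i + b j ≠ 0 ∧ b i + b j ≠ c := by
      intro i j hij
      exact ⟨fun h => hF (S10.degen c b hb i j hij (Or.inl h)),
        fun h => hF (S10.degen c b hb i j hij (Or.inr h))⟩
    obtain ⟨binj, bli, hcs, hc3, hcw⟩ := S10.cone_concl c b hb h0 hnd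
    have hc0 : c ≠ 0 := by
      rintro rfl
      exact hcs (Submodule.zero_mem _)
    have hb0 : ∀ i, b i ≠ 0 := by
      intro i h
      apply h0
      rw [S10.coneB, ← h]
      refine Multiset.mem_add.2 (Or.inr (Multiset.mem_add.2 (Or.inl ?_)))
      exact Multiset.mem_map_of_mem _ (Finset.mem_univ_val i)
    let p : Fin 5 → Projectivization (ZMod 2) (Fin v → ZMod 2) :=
      fun i => Projectivization.mk (ZMod 2) (b i) (hb0 i)
    have pinj : Function.Injective p := by
      intro i j hij
      have := congrArg Projectivization.rep hij
      simp only [p, S10.rep_mk] at this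
      exact binj this
    have hsup : ∀ S : Finset (Fin 5), (⨆ P ∈ S.image p, Projectivization.submodule P) =
        Submodule.span (ZMod 2) (b '' (S : Set (Fin 5))) := by
      intro S
      rw [Finset.iSup_finset_image]
      simp only [p, S10.sub_mk]
      rw [← Submodule.span_iUnion₂]
      congr 1
      ext w
      simp [eq_comm]
    refine ⟨Finset.univ.image p, Projectivization.mk (ZMod 2) c hc0, ⟨?_, ?_⟩, ?_, ?_, ?_⟩
    · rw [Finset.card_image_of_injective _ pinj]; simp
    · intro T hT hTc
      obtain ⟨S, _, rfl⟩ := Finset.subset_image_iff.1 hT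
      rw [Finset.card_image_of_injective _ pinj] at hTc
      rw [hsup, Set.image_eq_range]
      have := finrank_span_eq_card (bli S hTc)
      simp only [Fintype.card_coe, SetLike.coe_sort_coe] at this
      rw [← hTc, ← this]
      rfl
    · rw [hsup, S10.sub_le, S10.rep_mk]
      simpa using hcs
    · rw [hxc, S10.rep_mk, hc3]
    · intro Q hQ
      rw [hxc, hcw _ Q.rep_nonzero]
      · congr 1
        rw [eq_iff_iff]
        simp only [Finset.mem_image, Finset.mem_univ, true_and, exists_exists_eq_and]
        refine exists_congr fun i => ?_
        simp only [p]
        rw [S10.sub_le, S10.sub_mk, S10.sub_mk, ← Submodule.span_union, Set.singleton_union]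
      · intro h
        apply hQ
        apply S10.rep_inj
        rw [h, S10.rep_mk]
end

section
/- There is no 8-divisible multiset of points in PG(v-1,2) of cardinality 27 with all point multiplicities at most 3. Equivalently, Γ_2(8,27) = 4: the minimum possible maximum point multiplicity of an 8-divisible multiset of cardinality 27 over F_2 equals 4. -/
open scoped Classical

namespace Gam

abbrev W (v : ℕ) := Fin v → ZMod 2

noncomputable def s {v : ℕ} (h x : W v) : ℤ := if h ⬝ᵥ x = 0 then 1 else -1

noncomputable def F {v : ℕ} (f : W v → ℤ) (h : W v) : ℤ := ∑ x, f x * s h x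

lemma zm (a : ZMod 2) : a = 0 ∨ a = 1 := by revert a; decide

lemma s_cases {v : ℕ} (h x : W v) : s h x = 1 ∨ s h x = -1 := by
  unfold s; split_ifs <;> simp

lemma s_add {v : ℕ} (h k x : W v) : s (h + k) x = s h x * s k x := by
  unfold s
  rw [add_dotProduct]
  have h2 : (1 : ZMod 2) + 1 = 0 := by decide
  rcases zm (h ⬝ᵥ x) with a | a <;> rcases zm (k ⬝ᵥ x) with b | b <;> simp [a, b, h2]

lemma s_comm {v : ℕ} (h x : W v) : s h x = s x h := by
  unfold s; rw [dotProduct_comm]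

lemma s_zero {v : ℕ} (h : W v) : s h 0 = 1 := by simp [s]

lemma s_zero' {v : ℕ} (h : W v) : s 0 h = 1 := by simp [s]

lemma exists_neg {v : ℕ} (x : W v) (hx : x ≠ 0) : ∃ k, s k x = -1 := by
  obtain ⟨i, hi⟩ : ∃ i, x i ≠ 0 := Function.ne_iff.1 hx
  refine ⟨Pi.single i 1, ?_⟩
  unfold s
  rw [single_dotProduct, one_mul, if_neg hi]

lemma sum_s {v : ℕ} (x : W v) (hx : x ≠ 0) : ∑ h, s h x = 0 := by
  obtain ⟨k, hk⟩ := exists_neg x hx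
  have h1 : ∑ h, s (h + k) x = ∑ h, s h x :=
    Equiv.sum_comp (Equiv.addRight k) (fun h => s h x)
  have h3 : ∑ h, s (h + k) x = - ∑ h, s h x := by
    rw [← Finset.sum_neg_distrib]
    refine Finset.sum_congr rfl fun h _ => ?_
    rw [s_add, hk]; ring
  rw [h1] at h3
  exact self_eq_neg.1 h3

lemma add_self' {v : ℕ} (x : W v) : x + x = 0 := by
  funext i; simp only [Pi.add_apply, Pi.zero_apply]; generalize x i = a; revert a; decide

lemma sum_ss {v : ℕ} (x y : W v) : ∑ h, s h x * s h y = if x = y then 2 ^ v else 0 := by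
  have : ∀ h, s h x * s h y = s h (x + y) := by
    intro h; rw [s_comm h x, s_comm h y, s_comm h, s_add]
  simp only [this]
  split_ifs with hxy
  · subst hxy
    simp [add_self', s_zero]
  · apply sum_s
    intro h0
    apply hxy
    have := congrArg (· + y) h0
    simpa [add_assoc, add_self'] using this

lemma sum_sF {v : ℕ} (f : W v → ℤ) (P : W v) : ∑ h, s h P * F f h = 2 ^ v * f P := by
  unfold F
  simp only [Finset.mul_sum]
  rw [Finset.sum_comm]
  have : ∀ x, ∑ h, s h P * (f x * s h x) = f x * (if P = x then 2 ^ v else 0) := by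
    intro x
    rw [← sum_ss, Finset.mul_sum]
    exact Finset.sum_congr rfl fun h _ => by ring
  simp only [this]
  simp [mul_comm]

lemma sum_F {v : ℕ} (f : W v → ℤ) (h0 : f 0 = 0) : ∑ h, F f h = 0 := by
  have := sum_sF f 0
  simpa [s_zero, h0] using this

lemma sum_FF {v : ℕ} (f : W v → ℤ) : ∑ h, F f h * F f h = 2 ^ v * ∑ x, f x * f x := by
  have : ∀ h, F f h * F f h = ∑ x, f x * (s h x * F f h) := by
    intro h
    conv_lhs => lhs; unfold F
    rw [Finset.sum_mul]
    exact Finset.sum_congr rfl fun h _ => by ring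
  simp only [this]
  rw [Finset.sum_comm, Finset.mul_sum]
  refine Finset.sum_congr rfl fun x _ => ?_
  rw [← Finset.mul_sum, sum_sF]; ring

lemma F_le {v : ℕ} (f : W v → ℤ) (hf : ∀ x, 0 ≤ f x) (h : W v) : F f h ≤ ∑ x, f x := by
  refine Finset.sum_le_sum fun x _ => ?_
  rcases s_cases h x with a | a <;> rw [a] <;> linarith [hf x]

lemma le_F {v : ℕ} (f : W v → ℤ) (hf : ∀ x, 0 ≤ f x) (h : W v) : -∑ x, f x ≤ F f h := by
  rw [← Finset.sum_neg_distrib]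
  refine Finset.sum_le_sum fun x _ => ?_
  rcases s_cases h x with a | a <;> rw [a] <;> linarith [hf x]

lemma F_zero {v : ℕ} (f : W v → ℤ) : F f 0 = ∑ x, f x := by simp [F, s_zero']

/-- nonnegative weight function, zero at the origin, of cardinality n, divisible by d -/
structure Dv {v : ℕ} (f : W v → ℤ) (n d : ℤ) : Prop where
  nn : ∀ x, 0 ≤ f x
  z : f 0 = 0
  card : ∑ x, f x = n
  dv : ∀ h, 2 * d ∣ n - F f h

noncomputable def res {v : ℕ} (f : W v → ℤ) (k : W v) (x : W v) : ℤ :=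
  if k ⬝ᵥ x = 0 then f x else 0

lemma two_res {v : ℕ} (f : W v → ℤ) (k x : W v) : 2 * res f k x = f x * (1 + s k x) := by
  unfold res s; split_ifs <;> ring

lemma res_F {v : ℕ} (f : W v → ℤ) (k h : W v) : 2 * F (res f k) h = F f h + F f (h + k) := by
  unfold F
  rw [Finset.mul_sum, ← Finset.sum_add_distrib]
  refine Finset.sum_congr rfl fun x _ => ?_
  rw [← mul_assoc, two_res, s_add]; ring

lemma Dv.res {v : ℕ} {f : W v → ℤ} {n d : ℤ} (D : Dv f n (2 * d)) (k : W v) (m : ℤ)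
    (hm : 2 * m = n + F f k) : Dv (res f k) m d := by
  have hc : ∑ x, Gam.res f k x = m := by
    have := res_F f k 0
    rw [F_zero, F_zero, D.card, zero_add] at this
    linarith
  refine ⟨fun x => ?_, ?_, hc, fun h => ?_⟩
  · unfold Gam.res; split_ifs
    · exact D.nn x
    · exact le_rfl
  · simp [Gam.res, D.z]
  · obtain ⟨a, ha⟩ := D.dv h
    obtain ⟨b, hb⟩ := D.dv (h + k)
    obtain ⟨c, hc⟩ := D.dv k
    refine ⟨a + b - c, ?_⟩
    have := res_F f k h
    linarith

lemma lemA {v : ℕ} {f : W v → ℤ} (D : Dv f 3 2) (P : W v) (hP : P ≠ 0) : f P ≤ 1 := by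
  have key : 0 ≤ ∑ h, (1 - s h P) * (F f h + 1) := by
    refine Finset.sum_nonneg fun h _ => ?_
    have h1 := D.dv h
    have h2 := le_F f D.nn h
    rw [D.card] at h2
    have h3 : 0 ≤ F f h + 1 := by omega
    rcases s_cases h P with a | a <;> rw [a] <;> linarith
  have e : ∑ h, (1 - s h P) * (F f h + 1) = 2 ^ v - 2 ^ v * f P := by
    have : ∀ h, (1 - s h P) * (F f h + 1) = F f h + 1 - s h P * F f h - s h P := by
      intro h; ring
    simp only [this]
    rw [Finset.sum_sub_distrib, Finset.sum_sub_distrib, Finset.sum_add_distrib, sum_F f D.z,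
      sum_sF, sum_s P hP]
    simp
  rw [e] at key
  have : (0 : ℤ) < 2 ^ v := by positivity
  nlinarith

lemma lemB {v : ℕ} {f : W v → ℤ} (D : Dv f 11 4) (h3 : ∀ x, f x ≤ 3) : False := by
  have vals : ∀ h, F f h = 11 ∨ F f h = 3 ∨ F f h = -5 := by
    intro h
    have h1 := D.dv h
    have h2 := le_F f D.nn h
    have h4 := F_le f D.nn h
    rw [D.card] at h2 h4
    omega
  have le1 : ∀ P, f P ≤ 1 := by
    intro P
    by_cases hP : P = 0
    · rw [hP, D.z]; norm_num
    obtain ⟨h, hs, hF⟩ : ∃ h, s h P = 1 ∧ F f h = -5 := by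
      by_contra hc
      push Not at hc
      have key : 0 < ∑ h, (1 + s h P) * (F f h - 3) := by
        refine Finset.sum_pos' (fun h _ => ?_) ⟨0, Finset.mem_univ _, ?_⟩
        · rcases s_cases h P with a | a
          · have := hc h a
            rcases vals h with b | b | b
            · rw [a, b]; norm_num
            · rw [a, b]; norm_num
            · exact absurd b this
          · rw [a]; norm_num
        · rw [F_zero, D.card, s_zero']; norm_num
      have e : ∑ h, (1 + s h P) * (F f h - 3) = 2 ^ v * f P - 3 * 2 ^ v := by
        have : ∀ h, (1 + s h P) * (F f h - 3) = F f h + s h P * F f h - 3 * s h P - 3 := by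
          intro h; ring
        simp only [this]
        rw [Finset.sum_sub_distrib, Finset.sum_sub_distrib, Finset.sum_add_distrib, sum_F f D.z,
          sum_sF, ← Finset.mul_sum, sum_s P hP]
        simp [mul_comm]
      rw [e] at key
      have : (0 : ℤ) < 2 ^ v := by positivity
      nlinarith [h3 P]
    have D2 : Dv f 11 (2 * 2) := D
    have D4 : Dv (res f h) 3 2 := D2.res h 3 (by rw [hF]; norm_num)
    have := lemA D4 P hP
    have e := two_res f h P
    rw [hs] at e
    linarith
  have key : 0 ≤ ∑ h, (F f h - 3) * (F f h + 5) := by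
    refine Finset.sum_nonneg fun h _ => ?_
    rcases vals h with b | b | b <;> rw [b] <;> norm_num
  have e : ∑ h, (F f h - 3) * (F f h + 5) = 2 ^ v * ∑ x, f x * f x - 15 * 2 ^ v := by
    have : ∀ h, (F f h - 3) * (F f h + 5) = F f h * F f h + 2 * F f h - 15 := by
      intro h; ring
    simp only [this]
    rw [Finset.sum_sub_distrib, Finset.sum_add_distrib, ← Finset.mul_sum, sum_F f D.z, sum_FF]
    simp [mul_comm]
  have e2 : ∑ x, f x * f x ≤ 11 := by
    rw [← D.card]
    refine Finset.sum_le_sum fun x _ => ?_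
    nlinarith [D.nn x, le1 x]
  rw [e] at key
  have : (0 : ℤ) < 2 ^ v := by positivity
  nlinarith

lemma lemC {v : ℕ} {f : W v → ℤ} (D : Dv f 27 8) (h3 : ∀ x, f x ≤ 3) : False := by
  have D2 : Dv f 27 (2 * 4) := D
  have pos : ∀ h, 0 < F f h := by
    intro h
    have h1 := D.dv h
    have h2 := le_F f D.nn h
    rw [D.card] at h2
    by_contra hc
    have : F f h = -5 ∨ F f h = -21 := by omega
    rcases this with e | e
    · refine lemB (D2.res h 11 (by rw [e]; norm_num)) fun x => ?_
      unfold res; split_ifs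
      · exact h3 x
      · norm_num
    · have D3 := D2.res h 3 (by rw [e]; norm_num)
      have : 0 < ∑ k, F (res f h) k := by
        refine Finset.sum_pos (fun k _ => ?_) ⟨0, Finset.mem_univ _⟩
        have g1 := D3.dv k
        have g2 := le_F _ D3.nn k
        rw [D3.card] at g2
        omega
      rw [sum_F _ D3.z] at this
      exact lt_irrefl _ this
  have : 0 < ∑ k, F f k := Finset.sum_pos (fun k _ => pos k) ⟨0, Finset.mem_univ _⟩
  rw [sum_F _ D.z] at this
  exact lt_irrefl _ this

lemma rep_mk {v : ℕ} (x : W v) (hx : x ≠ 0) : (Projectivization.mk (ZMod 2) x hx).rep = x := by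
  obtain ⟨a, ha⟩ := Projectivization.exists_smul_eq_mk_rep (ZMod 2) x hx
  have : a = 1 := by clear ha; revert a; decide
  rw [← ha, this, one_smul]

lemma MVal_eq {v : ℕ} (M : Projectivization (ZMod 2) (W v) → ℕ) (f : W v → ℕ) (h0 : f 0 = 0)
    (hf : ∀ P, f P.rep = M P) (K : Submodule (ZMod 2) (W v)) :
    MVal M K = ∑ x, if x ∈ K then f x else 0 := by
  have := Fintype.ofFinite (Projectivization (ZMod 2) (W v))
  unfold MVal
  rw [finsum_mem_def, finsum_eq_sum_of_fintype]
  refine Fintype.sum_of_injective Projectivization.rep ?_ _ _ ?_ ?_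
  · intro P Q h
    rw [← P.mk_rep, ← Q.mk_rep]
    simp only [h]
  · intro x hx
    by_cases h : x = 0
    · simp [h, h0]
    · exact absurd ⟨_, rep_mk x h⟩ hx
  · intro P
    rw [Set.indicator_apply, hf]
    simp only [Set.mem_ofPred_eq, Projectivization.submodule_eq,
      Submodule.span_singleton_le_iff_mem]

noncomputable def ofM {v : ℕ} (M : Projectivization (ZMod 2) (W v) → ℕ) (x : W v) : ℕ :=
  if hx : x ≠ 0 then M (Projectivization.mk (ZMod 2) x hx) else 0

lemma ofM_rep {v : ℕ} (M : Projectivization (ZMod 2) (W v) → ℕ) (P) : ofM M P.rep = M P := by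
  unfold ofM
  rw [dif_pos P.rep_nonzero, P.mk_rep]

noncomputable def dual {v : ℕ} (h : W v) : W v →ₗ[ZMod 2] ZMod 2 :=
  dotProductBilin (ZMod 2) (ZMod 2) h

lemma dual_apply {v : ℕ} (h x : W v) : dual h x = h ⬝ᵥ x := rfl

lemma ker_rank {v : ℕ} (h : W v) (hh : h ≠ 0) :
    Module.finrank (ZMod 2) (LinearMap.ker (dual h)) + 1 = Module.finrank (ZMod 2) (W v) := by
  have h1 := LinearMap.finrank_range_add_finrank_ker (dual h)
  have h2 : LinearMap.range (dual h) = ⊤ := by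
    apply LinearMap.range_eq_top.2
    apply LinearMap.surjective
    intro h0
    apply hh
    funext i
    have := LinearMap.congr_fun h0 (Pi.single i 1)
    simpa [dual_apply] using this
  rw [h2] at h1
  simp only [finrank_top, Module.finrank_self] at h1
  omega

theorem part1 (v : ℕ) (M : Projectivization (ZMod 2) (W v) → ℕ)
    (hD : IsDivisible 8 M) (hc : MVal M ⊤ = 27) : ¬ (∀ P, M P ≤ 3) := by
  intro h3
  have z : ofM M 0 = 0 := by simp [ofM]
  have hM := MVal_eq M (ofM M) z (ofM_rep M)
  have hc' : ∑ x, (ofM M x : ℤ) = 27 := by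
    have := hM ⊤
    rw [hc] at this
    simp only [Submodule.mem_top, if_true] at this
    exact_mod_cast this.symm
  refine lemC (f := fun x => (ofM M x : ℤ)) ⟨fun x => by positivity, by simp [z], hc', ?_⟩ ?_
  · intro h
    by_cases hh : h = 0
    · rw [hh, F_zero, hc']; simp
    have d := hD _ (ker_rank h hh)
    rw [hc] at d
    have e : F (fun x => (ofM M x : ℤ)) h = 2 * (MVal M (LinearMap.ker (dual h)) : ℤ) - 27 := by
      rw [hM, ← hc']
      unfold F
      push_cast
      rw [Finset.mul_sum, ← Finset.sum_sub_distrib]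
      refine Finset.sum_congr rfl fun x _ => ?_
      simp only [LinearMap.mem_ker, dual_apply, s]
      split_ifs <;> ring
    rw [e]
    unfold Nat.ModEq at d
    omega
  · intro x
    simp only [ofM]
    split_ifs
    · exact_mod_cast h3 _
    · norm_num

def subL : Submodule (ZMod 2) (W 6) where
  carrier := {x | x 2 = 0 ∧ x 3 = 0 ∧ x 4 = 0 ∧ x 5 = 0}
  add_mem' := by rintro a b ⟨h1, h2, h3, h4⟩ ⟨g1, g2, g3, g4⟩; simp [*]
  zero_mem' := by simp
  smul_mem' := by rintro c a ⟨h1, h2, h3, h4⟩; simp [*]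

def subS : Submodule (ZMod 2) (W 6) where
  carrier := {x | x 0 = 0 ∧ x 1 = 0}
  add_mem' := by rintro a b ⟨h1, h2⟩ ⟨g1, g2⟩; simp [*]
  zero_mem' := by simp
  smul_mem' := by rintro c a ⟨h1, h2⟩; simp [*]

lemma mem_L (x : W 6) : x ∈ subL ↔ x 2 = 0 ∧ x 3 = 0 ∧ x 4 = 0 ∧ x 5 = 0 := Iff.rfl
lemma mem_S (x : W 6) : x ∈ subS ↔ x 0 = 0 ∧ x 1 = 0 := Iff.rfl

def eL : subL ≃ (W 2) where
  toFun x := ![x.1 0, x.1 1]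
  invFun y := ⟨![y 0, y 1, 0, 0, 0, 0], by simp [mem_L]⟩
  left_inv := by
    rintro ⟨x, h1, h2, h3, h4⟩; ext i; fin_cases i <;> simp [*]
  right_inv := by
    intro y; ext i; fin_cases i <;> simp

def eS : subS ≃ (W 4) where
  toFun x := ![x.1 2, x.1 3, x.1 4, x.1 5]
  invFun y := ⟨![0, 0, y 0, y 1, y 2, y 3], by simp [mem_S]⟩
  left_inv := by
    rintro ⟨x, h1, h2⟩; ext i; fin_cases i <;> simp [*]
  right_inv := by
    intro y; ext i; fin_cases i <;> simp

lemma card_sub (K : Submodule (ZMod 2) (W 6)) :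
    Nat.card K = 2 ^ Module.finrank (ZMod 2) K := by
  rw [Module.natCard_eq_pow_finrank (K := ZMod 2), Nat.card_zmod]

lemma rank_L : Module.finrank (ZMod 2) subL = 2 := by
  have := card_sub subL
  rw [Nat.card_congr eL] at this
  simp only [W, Nat.card_eq_fintype_card, Fintype.card_fun, ZMod.card, Fintype.card_fin] at this
  exact (Nat.pow_right_injective le_rfl this).symm

lemma rank_S : Module.finrank (ZMod 2) subS = 4 := by
  have := card_sub subS
  rw [Nat.card_congr eS] at this
  simp only [W, Nat.card_eq_fintype_card, Fintype.card_fun, ZMod.card, Fintype.card_fin] at this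
  exact (Nat.pow_right_injective le_rfl this).symm

noncomputable def g (x : W 6) : ℕ :=
  if x = 0 then 0 else if x ∈ subL then 4 else if x ∈ subS then 1 else 0

lemma g_eq (x : W 6) : g x + (if x = 0 then 5 else 0) =
    4 * (if x ∈ subL then 1 else 0) + if x ∈ subS then 1 else 0 := by
  unfold g
  by_cases h : x = 0
  · simp [h]
  by_cases hL : x ∈ subL <;> by_cases hS : x ∈ subS
  · exfalso; apply h
    obtain ⟨h1, h2, h3, h4⟩ := hL
    obtain ⟨h5, h6⟩ := hS
    funext i; fin_cases i <;> simp [*]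
  all_goals simp [h, hL, hS]

noncomputable def Mx (P : Projectivization (ZMod 2) (W 6)) : ℕ := g P.rep

lemma count (K : Submodule (ZMod 2) (W 6)) : ∑ x, (if x ∈ K then 1 else 0) = Nat.card K := by
  simp [Nat.card_eq_fintype_card, Fintype.card_subtype]

lemma Mx_val (K : Submodule (ZMod 2) (W 6)) :
    MVal Mx K + 5 = 4 * 2 ^ Module.finrank (ZMod 2) ↥(K ⊓ subL)
      + 2 ^ Module.finrank (ZMod 2) ↥(K ⊓ subS) := by
  rw [MVal_eq Mx g (by simp [g]) (fun P => rfl), ← card_sub, ← card_sub, ← count, ← count,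
    Finset.mul_sum, ← Finset.sum_add_distrib]
  have : (5 : ℕ) = ∑ x : W 6, if x = 0 then 5 else 0 := by simp
  conv_lhs => rw [this]
  rw [← Finset.sum_add_distrib]
  refine Finset.sum_congr rfl fun x _ => ?_
  have e := g_eq x
  by_cases hK : x ∈ K
  · simpa [hK] using e
  · have : x ≠ 0 := by rintro rfl; exact hK K.zero_mem
    simp [hK, this]

lemma Mx_top : MVal Mx ⊤ = 27 := by
  have := Mx_val ⊤
  rw [top_inf_eq, top_inf_eq, rank_L, rank_S] at this
  omega

lemma inf_rank (H K : Submodule (ZMod 2) (W 6)) :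
    Module.finrank (ZMod 2) H + Module.finrank (ZMod 2) K ≤
      6 + Module.finrank (ZMod 2) ↥(H ⊓ K) := by
  have h1 := Submodule.finrank_sup_add_finrank_inf_eq H K
  have h2 := Submodule.finrank_le (H ⊔ K)
  simp only [Module.finrank_fintype_fun_eq_card, Fintype.card_fin] at h2
  omega

theorem part2 : IsDivisible 8 Mx := by
  intro H hH
  simp only [Module.finrank_fintype_fun_eq_card, Fintype.card_fin] at hH
  rw [Mx_top]
  have e := Mx_val H
  have h1 := inf_rank H subL
  have h2 := inf_rank H subS
  rw [rank_L] at h1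
  rw [rank_S] at h2
  obtain ⟨a, ha⟩ : 2 ^ 1 ∣ 2 ^ Module.finrank (ZMod 2) ↥(H ⊓ subL) := pow_dvd_pow _ (by omega)
  obtain ⟨b, hb⟩ : 2 ^ 3 ∣ 2 ^ Module.finrank (ZMod 2) ↥(H ⊓ subS) := pow_dvd_pow _ (by omega)
  rw [ha, hb] at e
  unfold Nat.ModEq
  omega

end Gam

theorem stmt_16 :
    (∀ (v : ℕ) (M : Projectivization (ZMod 2) (Fin v → ZMod 2) → ℕ),
      IsDivisible 8 M → MVal M ⊤ = 27 → ¬ (∀ P, M P ≤ 3)) ∧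
    (∃ (v : ℕ) (M : Projectivization (ZMod 2) (Fin v → ZMod 2) → ℕ),
      IsDivisible 8 M ∧ MVal M ⊤ = 27 ∧ ∀ P, M P ≤ 4) := by
  refine ⟨Gam.part1, 6, Gam.Mx, Gam.part2, Gam.Mx_top, fun P => ?_⟩
  unfold Gam.Mx Gam.g
  split_ifs <;> norm_num
end
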